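/- arXiv:2402.17021 — 5 statements merged into one kernel-verified Lean document; each statement's English description precedes it below -/
import Mathlib

section
/- Fix real numbers u, v, w, s, t with u+v > 0 and s < t, and let k be a natural number with u + k − s/2 < 0. With q = q_N = exp(−2/√N), the limit as N → ∞ of [ (q^{−2u−2k+s};q)_∞ (−q^{v+w+s};q)_∞ (q^{v−u−k+t};q)_∞ (−q^{w−u−k+t};q)_∞ ] / [ (q^{v−u−k+s};q)_∞ (−q^{w−u−k+s};q)_∞ (q^{−2u−2k+t};q)_∞ (−q^{v+w+t};q)_∞ ] exists and equals Γ(v−u−k+s) Γ(−2u−2k+t) / ( Γ(−2u−2k+s) Γ(v−u−k+t) ). -/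
open Filter

/-- Infinite q-Pochhammer symbol `(a;q)_∞ = ∏_{k=0}^∞ (1 - a q^k)` for complex `a, q`. -/
noncomputable def qPochInf (a q : ℂ) : ℂ := ∏' k : ℕ, (1 - a * q ^ k)

/-- Weak asymmetry scaling `q_N = exp(-2/√N)`. -/
noncomputable def qN (N : ℕ) : ℝ := Real.exp (-2 / Real.sqrt N)

/-- Real powers of `q_N`: `q_N^x = exp(-2x/√N)`, as a complex number. -/
noncomputable def qpow (N : ℕ) (x : ℝ) : ℂ := Complex.ofReal (Real.exp (-2 * x / Real.sqrt N))

open Topology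

/-- The quotient of four q-Pochhammer symbols as one infinite product. -/
lemma aux_ratio (a b c d q : ℂ) (hq : ‖q‖ < 1) (hc : ∀ k : ℕ, 1 - c * q ^ k ≠ 0)
    (hd : ∀ k : ℕ, 1 - d * q ^ k ≠ 0) :
    qPochInf a q * qPochInf b q / (qPochInf c q * qPochInf d q) =
      ∏' k : ℕ, (1 + ((1 - a * q ^ k) * (1 - b * q ^ k) /
        ((1 - c * q ^ k) * (1 - d * q ^ k)) - 1)) := by
  have hs : ∀ x : ℂ, Summable (fun k : ℕ => ‖-(x * q ^ k)‖) := by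
    intro x
    simp only [norm_neg, norm_mul, norm_pow]
    exact (summable_geometric_of_lt_one (norm_nonneg _) hq).mul_left _
  have hm : ∀ x : ℂ, Multipliable (fun k : ℕ => 1 - x * q ^ k) := by
    intro x
    simpa only [sub_eq_add_neg] using multipliable_one_add_of_summable (hs x)
  have hn : ∀ x : ℂ, (∀ k : ℕ, 1 - x * q ^ k ≠ 0) → qPochInf x q ≠ 0 := by
    intro x hx
    have := tprod_one_add_ne_zero_of_summable (f := fun k : ℕ => -(x * q ^ k))
      (by simpa only [← sub_eq_add_neg] using hx) (hs x)
    simpa only [qPochInf, ← sub_eq_add_neg] using this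
  have h1 : ∀ x : ℂ, Tendsto (fun n => ∏ k ∈ Finset.range n, (1 - x * q ^ k)) atTop
      (𝓝 (qPochInf x q)) := fun x => (hm x).hasProd.tendsto_prod_nat
  have hab : HasProd (fun k : ℕ => (1 - a * q ^ k) * (1 - b * q ^ k))
    (qPochInf a q * qPochInf b q) := (hm a).hasProd.mul (hm b).hasProd
  have hcd : HasProd (fun k : ℕ => (1 - c * q ^ k) * (1 - d * q ^ k))
    (qPochInf c q * qPochInf d q) := (hm c).hasProd.mul (hm d).hasProd
  have h := hab.div₀ hcd (mul_ne_zero (hn c hc) (hn d hd))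
  rw [← h.tprod_eq]
  congr 1
  ext k
  ring

lemma aux_exp_diff (x y : ℝ) :
    |Real.exp x - Real.exp y| ≤ |x - y| * Real.exp (|x| + |y|) := by
  have key : ∀ x y : ℝ, y ≤ x → |Real.exp x - Real.exp y| ≤ |x - y| * Real.exp (|x| + |y|) := by
    intro x y h
    rw [abs_of_nonneg (sub_nonneg.2 (Real.exp_le_exp.2 h)), abs_of_nonneg (sub_nonneg.2 h)]
    have h1 : Real.exp y = Real.exp x * Real.exp (y - x) := by rw [← Real.exp_add]; ring_nf
    have h2 := Real.add_one_le_exp (y - x)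
    have h3 : Real.exp x ≤ Real.exp (|x| + |y|) :=
      Real.exp_le_exp.2 (by linarith [le_abs_self x, abs_nonneg y])
    calc Real.exp x - Real.exp y = Real.exp x * (1 - Real.exp (y - x)) := by rw [h1]; ring
      _ ≤ Real.exp x * (x - y) := by
        apply mul_le_mul_of_nonneg_left _ (Real.exp_pos x).le; linarith
      _ ≤ Real.exp (|x| + |y|) * (x - y) := by
        apply mul_le_mul_of_nonneg_right h3; linarith
      _ = _ := by ring
  rcases le_total y x with h | h
  · exact key x y h
  · have := key y x h
    rwa [abs_sub_comm, abs_sub_comm y x, add_comm |y|] at this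

/-- scaled version -/
lemma aux_exp_diff' (e A B : ℝ) (he : 0 < e) (he1 : e ≤ 1) :
    |Real.exp (-(e * A)) - Real.exp (-(e * B))| ≤
      e * (|A - B| * Real.exp (|A| + |B|)) := by
  refine (aux_exp_diff _ _).trans ?_
  have h1 : |-(e * A) - -(e * B)| = e * |A - B| := by
    rw [show -(e * A) - -(e * B) = -(e * (A - B)) by ring, abs_neg, abs_mul, abs_of_pos he]
  have h2 : |-(e * A)| + |-(e * B)| ≤ |A| + |B| := by
    rw [abs_neg, abs_neg, abs_mul, abs_mul, abs_of_pos he]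
    nlinarith [abs_nonneg A, abs_nonneg B]
  rw [h1, mul_assoc]
  gcongr

lemma aux_lower (y : ℝ) (hy : 0 ≤ y) : y * Real.exp (-(y / 2)) ≤ 1 - Real.exp (-y) := by
  have h := Real.self_le_sinh_iff.2 (show 0 ≤ y / 2 by linarith)
  rw [Real.sinh_eq] at h
  have h1 : Real.exp (y / 2) * Real.exp (-(y / 2)) = 1 := by rw [← Real.exp_add]; simp
  have h2 : Real.exp (-(y / 2)) * Real.exp (-(y / 2)) = Real.exp (-y) := by
    rw [← Real.exp_add]; ring_nf
  have h3 : y ≤ Real.exp (y / 2) - Real.exp (-(y / 2)) := by linarith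
  have := mul_le_mul_of_nonneg_right h3 (Real.exp_pos (-(y / 2))).le
  nlinarith

/-- the factor `1 - σ q^x` -/
noncomputable def fac (σ e x : ℝ) : ℝ := 1 - σ * Real.exp (-(e * x))

noncomputable def trm (σ A B δ e : ℝ) (k : ℕ) : ℝ :=
  fac σ e (A + k) * fac σ e (B + δ + k) / (fac σ e (B + k) * fac σ e (A + δ + k)) - 1

lemma aux_num (σ A B δ e k : ℝ) (hσ : |σ| = 1) (he : 0 < e) (he1 : e ≤ 1) :
    |fac σ e (A + k) * fac σ e (B + δ + k) - fac σ e (B + k) * fac σ e (A + δ + k)| ≤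
     e ^ 2 * Real.exp (-(e * k)) *
      ((|B - A| * Real.exp (|B| + |A|)) * (|0 - δ| * Real.exp (|0| + |δ|))) := by
  have h : fac σ e (A + k) * fac σ e (B + δ + k) - fac σ e (B + k) * fac σ e (A + δ + k)
    = σ * Real.exp (-(e * k)) * (Real.exp (-(e * B)) - Real.exp (-(e * A))) *
      (Real.exp (-(e * 0)) - Real.exp (-(e * δ))) := by
    have s : ∀ x y : ℝ, Real.exp (-(e * (x + y))) = Real.exp (-(e * x)) * Real.exp (-(e * y)) := by
      intro x y; rw [← Real.exp_add]; ring_nf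
    unfold fac
    simp only [s, mul_zero, neg_zero, Real.exp_zero]
    ring
  rw [h, abs_mul, abs_mul, abs_mul, hσ, Real.abs_exp, one_mul]
  have h1 := aux_exp_diff' e B A he he1
  have h2 := aux_exp_diff' e 0 δ he he1
  calc _ ≤ Real.exp (-(e * k)) * (e * (|B - A| * Real.exp (|B| + |A|))) *
        (e * (|0 - δ| * Real.exp (|0| + |δ|))) := by gcongr
    _ = _ := by ring

lemma aux_summable (K : ℝ) : Summable (fun k : ℕ => K / ((k : ℝ) + 1) ^ 2) := by
  have h := (summable_nat_add_iff 1).2 (Real.summable_one_div_nat_pow.2 (show 1 < 2 by norm_num))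
  have := h.mul_left K
  refine this.congr ?_
  intro k
  push_cast
  ring

lemma aux_bound_pos (A B δ : ℝ) (hA : 0 < A) (hB : 0 < B) (hδ : 0 < δ) :
    ∃ K : ℝ, ∀ e : ℝ, 0 < e → e ≤ 1 → ∀ k : ℕ, |trm 1 A B δ e k| ≤ K / ((k : ℝ) + 1) ^ 2 := by
  set M := ((|B - A| * Real.exp (|B| + |A|)) * (|0 - δ| * Real.exp (|0| + |δ|))) with hM
  have hM0 : 0 ≤ M := by positivity
  set m := min (min B (A + δ)) 1 with hm
  have hm0 : 0 < m := by simp only [hm, lt_min_iff]; exact ⟨⟨hB, by linarith⟩, one_pos⟩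
  have hmB : m ≤ B := (min_le_left _ _).trans (min_le_left _ _)
  have hmA : m ≤ A + δ := (min_le_left _ _).trans (min_le_right _ _)
  have hm1 : m ≤ 1 := min_le_right _ _
  refine ⟨M * Real.exp ((A + δ + B) / 2) / m ^ 2, ?_⟩
  intro e he he1 k
  have hk : (0 : ℝ) ≤ k := k.cast_nonneg
  have lo : ∀ x : ℝ, m ≤ x → e * (m * (k + 1)) * Real.exp (-(e * (x + k) / 2)) ≤
      fac 1 e (x + k) := by
    intro x hx
    have h := aux_lower (e * (x + k)) (by have : 0 < x := by linarith
                                          positivity)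
    unfold fac
    rw [one_mul]
    refine le_trans ?_ h
    gcongr
    nlinarith
  have hnum := aux_num 1 A B δ e k (by simp) he he1
  have l1 := lo B hmB
  have l2 := lo (A + δ) hmA
  have p1 : 0 < e * (m * (k + 1)) * Real.exp (-(e * (B + k) / 2)) := by positivity
  have p2 : 0 < e * (m * (k + 1)) * Real.exp (-(e * (A + δ + k) / 2)) := by positivity
  have hD := mul_le_mul l1 l2 p2.le (p1.le.trans l1)
  have hDpos := (mul_pos p1 p2).trans_le hD
  unfold trm
  rw [div_sub_one hDpos.ne', abs_div, abs_of_pos hDpos, div_le_iff₀ hDpos]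
  refine hnum.trans ?_
  rw [← hM]
  have hee : Real.exp (-(e * k)) ≤ Real.exp ((A + δ + B) / 2) *
      (Real.exp (-(e * (B + k) / 2)) * Real.exp (-(e * (A + δ + k) / 2))) := by
    rw [← Real.exp_add, ← Real.exp_add]
    apply Real.exp_le_exp.2
    nlinarith
  calc e ^ 2 * Real.exp (-(e * k)) * M ≤ e ^ 2 * (Real.exp ((A + δ + B) / 2) *
      (Real.exp (-(e * (B + k) / 2)) * Real.exp (-(e * (A + δ + k) / 2)))) * M := by gcongr
    _ = M * Real.exp ((A + δ + B) / 2) / m ^ 2 / ((k : ℝ) + 1) ^ 2 *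
      (e * (m * (k + 1)) * Real.exp (-(e * (B + k) / 2)) *
        (e * (m * (k + 1)) * Real.exp (-(e * (A + δ + k) / 2)))) := by
      field_simp
    _ ≤ _ := by gcongr

lemma aux_bound_neg (A B δ : ℝ) :
    ∃ K : ℝ, ∀ e : ℝ, 0 < e → e ≤ 1 → ∀ k : ℕ,
      |trm (-1) A B δ e k| ≤ K / ((k : ℝ) + 1) ^ 2 ∧ |trm (-1) A B δ e k| ≤ e ^ 2 * K := by
  set M := ((|B - A| * Real.exp (|B| + |A|)) * (|0 - δ| * Real.exp (|0| + |δ|))) with hM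
  have hM0 : 0 ≤ M := by positivity
  have h1e : 1 ≤ Real.exp 1 := Real.one_le_exp (by norm_num)
  refine ⟨2 * Real.exp 1 * M, ?_⟩
  intro e he he1 k
  have hk : (0 : ℝ) ≤ k := k.cast_nonneg
  have hnum := aux_num (-1) A B δ e k (by simp) he he1
  have g : ∀ x, 1 ≤ fac (-1) e x := by
    intro x; unfold fac; linarith [Real.exp_pos (-(e * x))]
  have hD : 1 ≤ fac (-1) e (B + k) * fac (-1) e (A + δ + k) := one_le_mul_of_one_le_of_one_le (g _) (g _)
  have hDpos : 0 < fac (-1) e (B + k) * fac (-1) e (A + δ + k) := by linarith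
  have hb : |trm (-1) A B δ e k| ≤ e ^ 2 * Real.exp (-(e * k)) * M := by
    unfold trm
    rw [div_sub_one hDpos.ne', abs_div, abs_of_pos hDpos, div_le_iff₀ hDpos]
    refine hnum.trans ?_
    rw [← hM]
    exact le_mul_of_one_le_right (by positivity) hD
  constructor
  · refine hb.trans ?_
    rw [le_div_iff₀ (by positivity)]
    have hy := Real.quadratic_le_exp_of_nonneg (show 0 ≤ e * ((k : ℝ) + 1) by positivity)
    have hy0 : 0 ≤ e * ((k : ℝ) + 1) := by positivity
    have h2 : (e * ((k : ℝ) + 1)) ^ 2 ≤ 2 * Real.exp (e * ((k : ℝ) + 1)) := by linarith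
    have h3 : Real.exp (e * ((k : ℝ) + 1)) * Real.exp (-(e * k)) ≤ Real.exp 1 := by
      rw [← Real.exp_add]; apply Real.exp_le_exp.2; linarith
    calc e ^ 2 * Real.exp (-(e * k)) * M * ((k : ℝ) + 1) ^ 2
        = (e * ((k : ℝ) + 1)) ^ 2 * Real.exp (-(e * k)) * M := by ring
      _ ≤ 2 * Real.exp (e * ((k : ℝ) + 1)) * Real.exp (-(e * k)) * M := by gcongr
      _ = 2 * (Real.exp (e * ((k : ℝ) + 1)) * Real.exp (-(e * k))) * M := by ring
      _ ≤ _ := by gcongr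
  · refine hb.trans ?_
    have : Real.exp (-(e * k)) ≤ 2 * Real.exp 1 := by
      have : Real.exp (-(e * k)) ≤ 1 := Real.exp_le_one_iff.2 (by nlinarith)
      linarith
    rw [mul_assoc]
    gcongr

lemma aux_fac_lim (y : ℝ) : Tendsto (fun e => fac 1 e y / e) (𝓝[>] 0) (𝓝 y) := by
  have h : HasDerivAt (fun e : ℝ => fac 1 e y) y 0 := by
    have h1 : HasDerivAt (fun e : ℝ => -(e * y)) (-y) 0 := by
      have h0 := ((hasDerivAt_id (0 : ℝ)).mul_const y).neg
      rw [one_mul] at h0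
      exact h0
    have := (h1.exp.const_mul 1).const_sub 1
    simpa [fac] using this
  have h2 := (hasDerivAt_iff_tendsto_slope.1 h).mono_left
    (nhdsWithin_mono 0 (fun x (hx : (0 : ℝ) < x) => hx.ne'))
  refine h2.congr ?_
  intro e
  simp [slope_def_field, fac]

lemma aux_trm_lim (A B δ : ℝ) (hA : 0 < A) (hB : 0 < B) (hδ : 0 < δ) (k : ℕ) :
    Tendsto (fun e => trm 1 A B δ e k) (𝓝[>] 0)
      (𝓝 ((A + k) * (B + δ + k) / ((B + k) * (A + δ + k)) - 1)) := by
  have hk : (0 : ℝ) ≤ k := k.cast_nonneg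
  have h := (((aux_fac_lim (A + k)).mul (aux_fac_lim (B + δ + k))).div
    ((aux_fac_lim (B + k)).mul (aux_fac_lim (A + δ + k))) (by positivity)).sub_const 1
  refine h.congr' ?_
  filter_upwards [self_mem_nhdsWithin] with e he
  have he : e ≠ 0 := ne_of_gt he
  unfold trm
  simp only [Pi.mul_apply, Pi.div_apply]
  congr 1
  rw [div_mul_div_comm, div_mul_div_comm, div_div_div_cancel_right₀ (mul_ne_zero he he)]

lemma aux_gamma (A B δ : ℝ) (hA : 0 < A) (hB : 0 < B) (hδ : 0 < δ) (K : ℝ)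
    (hK : ∀ k : ℕ, |(A + k) * (B + δ + k) / ((B + k) * (A + δ + k)) - 1| ≤ K / ((k : ℝ) + 1) ^ 2) :
    ∏' k : ℕ, (1 + (((A + k) * (B + δ + k) / ((B + k) * (A + δ + k)) - 1 : ℝ) : ℂ)) =
      Complex.Gamma (B : ℂ) * Complex.Gamma ((A + δ : ℝ) : ℂ) /
        (Complex.Gamma (A : ℂ) * Complex.Gamma ((B + δ : ℝ) : ℂ)) := by
  have hs : Summable (fun k : ℕ =>
      ‖(((A + k) * (B + δ + k) / ((B + k) * (A + δ + k)) - 1 : ℝ) : ℂ)‖) := by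
    refine (aux_summable K).of_nonneg_of_le (fun _ => norm_nonneg _) ?_
    intro k
    rw [Complex.norm_real]
    exact hK k
  have h1 := (multipliable_one_add_of_summable hs).hasProd.tendsto_prod_nat.comp (tendsto_add_atTop_nat 1)
  refine tendsto_nhds_unique h1 ?_
  have hne : Real.Gamma A * Real.Gamma (B + δ) ≠ 0 :=
    (mul_pos (Real.Gamma_pos_of_pos hA) (Real.Gamma_pos_of_pos (by linarith))).ne'
  have h2 := ((Real.GammaSeq_tendsto_Gamma B).mul (Real.GammaSeq_tendsto_Gamma (A + δ))).div
    ((Real.GammaSeq_tendsto_Gamma A).mul (Real.GammaSeq_tendsto_Gamma (B + δ))) hne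
  have h3 := (Complex.continuous_ofReal.tendsto _).comp h2
  simp only [Complex.Gamma_ofReal]
  rw [← Complex.ofReal_mul, ← Complex.ofReal_mul, ← Complex.ofReal_div]
  refine h3.congr' ?_
  filter_upwards [eventually_gt_atTop 0] with n hn
  simp only [Function.comp_apply, Pi.mul_apply, Pi.div_apply]
  have hn' : (0 : ℝ) < n := by exact_mod_cast hn
  have hP : ∀ x : ℝ, 0 < x → 0 < ∏ j ∈ Finset.range (n + 1), (x + (j : ℝ)) := by
    intro x hx
    exact Finset.prod_pos (fun j _ => by positivity)
  have e1 : ∏ k ∈ Finset.range (n + 1),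
      (1 + (((A + k) * (B + δ + k) / ((B + k) * (A + δ + k)) - 1 : ℝ) : ℂ)) =
      ((∏ k ∈ Finset.range (n + 1), ((A + k) * (B + δ + k) / ((B + k) * (A + δ + k))) : ℝ) : ℂ) := by
    rw [Complex.ofReal_prod]
    refine Finset.prod_congr rfl (fun k _ => ?_)
    rw [Complex.ofReal_sub, Complex.ofReal_one]
    ring
  rw [e1]
  congr 1
  rw [Finset.prod_div_distrib, Finset.prod_mul_distrib, Finset.prod_mul_distrib]
  have p1 := (hP A hA).ne'
  have p2 := (hP B hB).ne'
  have p3 := (hP (A + δ) (by linarith)).ne'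
  have p4 := (hP (B + δ) (by linarith)).ne'
  have hf : (n.factorial : ℝ) ≠ 0 := by exact_mod_cast n.factorial_ne_zero
  have q1 := (Real.rpow_pos_of_pos hn' A).ne'
  have q2 := (Real.rpow_pos_of_pos hn' B).ne'
  have q3 := (Real.rpow_pos_of_pos hn' δ).ne'
  unfold Real.GammaSeq
  rw [Real.rpow_add hn', Real.rpow_add hn']
  field_simp

lemma aux_lim_pos (A B δ : ℝ) (hA : 0 < A) (hB : 0 < B) (hδ : 0 < δ) :
    Tendsto (fun e : ℝ => ∏' k : ℕ, (1 + ((trm 1 A B δ e k : ℝ) : ℂ))) (𝓝[>] 0)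
      (𝓝 (Complex.Gamma (B : ℂ) * Complex.Gamma ((A + δ : ℝ) : ℂ) /
        (Complex.Gamma (A : ℂ) * Complex.Gamma ((B + δ : ℝ) : ℂ)))) := by
  obtain ⟨K, hK⟩ := aux_bound_pos A B δ hA hB hδ
  have hev : ∀ᶠ e : ℝ in 𝓝[>] 0, 0 < e ∧ e ≤ 1 := by
    filter_upwards [Ioc_mem_nhdsGT (show (0 : ℝ) < 1 by norm_num)] with e he using he
  rw [← aux_gamma A B δ hA hB hδ K]
  · refine tendsto_tprod_one_add_of_dominated_convergence (aux_summable K) ?_ ?_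
    · intro k
      exact (Complex.continuous_ofReal.tendsto _).comp (aux_trm_lim A B δ hA hB hδ k)
    · filter_upwards [hev] with e he k
      rw [Complex.norm_real]
      exact hK e he.1 he.2 k
  · intro k
    refine le_of_tendsto (aux_trm_lim A B δ hA hB hδ k).abs ?_
    filter_upwards [hev] with e he using hK e he.1 he.2 k

lemma aux_lim_neg (A B δ : ℝ) :
    Tendsto (fun e : ℝ => ∏' k : ℕ, (1 + ((trm (-1) A B δ e k : ℝ) : ℂ))) (𝓝[>] 0) (𝓝 1) := by
  obtain ⟨K, hK⟩ := aux_bound_neg A B δ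
  have hev : ∀ᶠ e : ℝ in 𝓝[>] 0, 0 < e ∧ e ≤ 1 := by
    filter_upwards [Ioc_mem_nhdsGT (show (0 : ℝ) < 1 by norm_num)] with e he using he
  have h1 : ∏' _k : ℕ, (1 + (0 : ℂ)) = 1 := by simp
  suffices h2 : Tendsto (fun e : ℝ => ∏' k : ℕ, (1 + ((trm (-1) A B δ e k : ℝ) : ℂ))) (𝓝[>] 0)
      (𝓝 (∏' _k : ℕ, (1 + (0 : ℂ)))) by
    rwa [h1] at h2
  refine tendsto_tprod_one_add_of_dominated_convergence (g := fun _ : ℕ => (0 : ℂ)) (aux_summable K) ?_ ?_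
  · intro k
    have h0 : Tendsto (fun e : ℝ => e ^ 2 * K) (𝓝[>] 0) (𝓝 0) := by
      have : Continuous (fun e : ℝ => e ^ 2 * K) := by fun_prop
      simpa using (this.tendsto 0).mono_left nhdsWithin_le_nhds
    refine squeeze_zero_norm' ?_ h0
    filter_upwards [hev] with e he
    rw [Complex.norm_real]
    exact (hK e he.1 he.2 k).2
  · filter_upwards [hev] with e he k
    rw [Complex.norm_real]
    exact (hK e he.1 he.2 k).1

lemma aux_fac (σ e x : ℝ) (k : ℕ) :
    1 - ((σ * Real.exp (-(e * x)) : ℝ) : ℂ) * ((Real.exp (-e) : ℝ) : ℂ) ^ k =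
      ((fac σ e (x + k) : ℝ) : ℂ) := by
  rw [← Complex.ofReal_pow, ← Complex.ofReal_mul, ← Complex.ofReal_one, ← Complex.ofReal_sub]
  congr 1
  unfold fac
  rw [mul_assoc, ← Real.exp_nat_mul, ← Real.exp_add]
  ring_nf

lemma aux_ratio' (σ A B δ e : ℝ) (he : 0 < e) (h1 : ∀ k : ℕ, fac σ e (B + k) ≠ 0)
    (h2 : ∀ k : ℕ, fac σ e (A + δ + k) ≠ 0) :
    qPochInf ((σ * Real.exp (-(e * A)) : ℝ) : ℂ) (Real.exp (-e) : ℝ) *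
      qPochInf ((σ * Real.exp (-(e * (B + δ))) : ℝ) : ℂ) (Real.exp (-e) : ℝ) /
      (qPochInf ((σ * Real.exp (-(e * B)) : ℝ) : ℂ) (Real.exp (-e) : ℝ) *
       qPochInf ((σ * Real.exp (-(e * (A + δ))) : ℝ) : ℂ) (Real.exp (-e) : ℝ)) =
      ∏' k : ℕ, (1 + ((trm σ A B δ e k : ℝ) : ℂ)) := by
  rw [aux_ratio]
  · refine tprod_congr (fun k => ?_)
    simp only [aux_fac]
    unfold trm
    push_cast
    rfl
  · rw [Complex.norm_real, Real.norm_eq_abs, Real.abs_exp]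
    exact Real.exp_lt_one_iff.2 (by linarith)
  · intro k; rw [aux_fac]; exact_mod_cast h1 k
  · intro k; rw [aux_fac]; exact_mod_cast h2 k

theorem statement8 (u v w s t : ℝ) (k : ℕ) (huv : 0 < u + v) (hst : s < t)
    (hk : u + (k : ℝ) - s / 2 < 0) :
    Tendsto (fun N : ℕ =>
      (qPochInf (qpow N (-2 * u - 2 * k + s)) (qN N) * qPochInf (-(qpow N (v + w + s))) (qN N) *
       qPochInf (qpow N (v - u - k + t)) (qN N) * qPochInf (-(qpow N (w - u - k + t))) (qN N)) /
      (qPochInf (qpow N (v - u - k + s)) (qN N) * qPochInf (-(qpow N (w - u - k + s))) (qN N) *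
       qPochInf (qpow N (-2 * u - 2 * k + t)) (qN N) * qPochInf (-(qpow N (v + w + t))) (qN N)))
      atTop
      (nhds (Complex.Gamma ((v - u - k + s : ℝ) : ℂ) * Complex.Gamma ((-2 * u - 2 * k + t : ℝ) : ℂ) /
        (Complex.Gamma ((-2 * u - 2 * k + s : ℝ) : ℂ) * Complex.Gamma ((v - u - k + t : ℝ) : ℂ)))) := by
  have hk0 : (0 : ℝ) ≤ k := k.cast_nonneg
  have hA : 0 < -2 * u - 2 * k + s := by linarith
  have hB : 0 < v - u - k + s := by linarith
  have hδ : 0 < t - s := by linarith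
  have hN : Tendsto (fun N : ℕ => 2 / Real.sqrt N) atTop (𝓝[>] 0) := by
    rw [tendsto_nhdsWithin_iff]
    constructor
    · exact (Real.tendsto_sqrt_atTop.comp tendsto_natCast_atTop_atTop).const_div_atTop 2
    · filter_upwards [eventually_gt_atTop 0] with N hN
      have : (0 : ℝ) < N := by exact_mod_cast hN
      show 0 < 2 / Real.sqrt N
      positivity
  have e1 : v - u - k + t = v - u - k + s + (t - s) := by ring
  have e2 : -2 * u - 2 * k + t = -2 * u - 2 * k + s + (t - s) := by ring
  have e3 : w - u - k + t = w - u - k + s + (t - s) := by ring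
  have e4 : v + w + t = v + w + s + (t - s) := by ring
  rw [e1, e2, e3, e4]
  generalize -2 * u - 2 * (k : ℝ) + s = A at *
  generalize v - u - (k : ℝ) + s = B at *
  generalize v + w + s = C at *
  generalize w - u - (k : ℝ) + s = D at *
  generalize t - s = δ at *
  have h := ((aux_lim_pos A B δ hA hB hδ).mul (aux_lim_neg C D δ)).comp hN
  rw [mul_one] at h
  refine h.congr' ?_
  filter_upwards [eventually_gt_atTop 0] with N hN
  have hNp : (0 : ℝ) < N := by exact_mod_cast hN
  have he : 0 < 2 / Real.sqrt N := by positivity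
  have q0 : qN N = Real.exp (-(2 / Real.sqrt N)) := by unfold qN; ring_nf
  have q1 : ∀ x, qpow N x = ((1 * Real.exp (-(2 / Real.sqrt N * x)) : ℝ) : ℂ) := by
    intro x; unfold qpow; ring_nf
  have q2 : ∀ x, -qpow N x = (((-1) * Real.exp (-(2 / Real.sqrt N * x)) : ℝ) : ℂ) := by
    intro x; rw [q1, ← Complex.ofReal_neg]; ring_nf
  simp only [Function.comp_apply]
  simp only [q2]
  simp only [q1, q0]
  have f1 : ∀ x : ℝ, 0 < x → ∀ k : ℕ, fac 1 (2 / Real.sqrt N) (x + k) ≠ 0 := by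
    intro x hx k
    unfold fac
    have : Real.exp (-(2 / Real.sqrt N * (x + k))) < 1 := by
      apply Real.exp_lt_one_iff.2
      have : 0 < 2 / Real.sqrt N * (x + k) := by positivity
      linarith
    apply ne_of_gt
    linarith
  have f2 : ∀ x : ℝ, ∀ k : ℕ, fac (-1) (2 / Real.sqrt N) (x + k) ≠ 0 := by
    intro x k
    unfold fac
    have := Real.exp_pos (-(2 / Real.sqrt N * (x + k)))
    apply ne_of_gt
    linarith
  rw [← aux_ratio' 1 A B δ _ he (f1 B hB) (f1 (A + δ) (by linarith)),
    ← aux_ratio' (-1) C D δ _ he (f2 D) (f2 (C + δ)), div_mul_div_comm]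
  congr 1 <;> ring
end

section
/- Fix real numbers u, v, w, s, t, ρ with u+v > 0, w > 0, s < t, u − t/2 < 0 and ρ > 0, and let j be a natural number with j ≤ −u + t/2. For each positive integer N with 4N > ρ, let q = q_N = exp(−2/√N) and θ = arccos(1 − ρ/(2N)). Then the limit as N → ∞ of [ (q;q)_∞ (−q^{v+w+s};q)_∞ (q^{j+v+u};q)_∞ (q^{v−j−u+t};q)_∞ (−q^{w+j+u};q)_∞ (−q^{w−j−u+t};q)_∞ (q^{t−s};q)_∞ · (e^{2iθ};q)_∞ (e^{−2iθ};q)_∞ ] / [ 4πN √(ρ/N) √(1 − ρ/(4N)) · (−q^{v+w+t};q)_∞ · ∏_{σ∈{+1,−1}} (q^{v+s/2} e^{σiθ};q)_∞ (−q^{w+s/2} e^{σiθ};q)_∞ (q^{j+u−s/2} e^{σiθ};q)_∞ (q^{t−s/2−j−u} e^{σiθ};q)_∞ ] exists and equals |Γ(v+s/2+i√ρ/2)|² · |Γ(j+u−s/2+i√ρ/2)|² · |Γ(t−s/2−j−u+i√ρ/2)|² / ( 8π √ρ · Γ(j+v+u) Γ(v−j−u+t) Γ(t−s) · |Γ(i√ρ)|²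 ). -/
open Filter

/-- `e^{ix}` for real `x`. -/
noncomputable def eI (x : ℝ) : ℂ := Complex.exp (Complex.I * x)

/-- `|Γ(a+ib)|² := Γ(a+ib)·Γ(a−ib)` for real `a, b`. -/
noncomputable def GammaSq (a b : ℝ) : ℂ :=
  Complex.Gamma ((a : ℂ) + (b : ℂ) * Complex.I) * Complex.Gamma ((a : ℂ) - (b : ℂ) * Complex.I)


namespace QG
open Complex Topology

noncomputable def L (σ : ℂ) (ε : ℝ) (x : ℂ) : ℂ := Complex.log (1 - σ * Complex.exp (-(ε * x)))

noncomputable def L' (σ : ℂ) (ε : ℝ) (x : ℂ) : ℂ := σ * ε / (Complex.exp (ε * x) - σ)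

noncomputable def L'' (σ : ℂ) (ε : ℝ) (x : ℂ) : ℂ :=
  -(σ * ε * (ε * Complex.exp (ε * x))) / (Complex.exp (ε * x) - σ) ^ 2

lemma norm_small {σ : ℂ} {ε : ℝ} {x : ℂ} (hσ : ‖σ‖ ≤ 1) (hε : 0 < ε) (hx : 0 < x.re) :
    ‖σ * Complex.exp (-(ε * x))‖ < 1 := by
  rw [norm_mul, Complex.norm_exp]
  have : Real.exp (-(ε * x)).re < 1 := by
    rw [Real.exp_lt_one_iff]
    simp
    positivity
  nlinarith [norm_nonneg σ, Real.exp_pos (-(ε * x)).re]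

lemma slit {σ : ℂ} {ε : ℝ} {x : ℂ} (hσ : ‖σ‖ ≤ 1) (hε : 0 < ε) (hx : 0 < x.re) :
    1 - σ * Complex.exp (-(ε * x)) ∈ slitPlane := by
  have := mem_slitPlane_of_norm_lt_one (z := -(σ * Complex.exp (-(ε * x))))
    (by rw [norm_neg]; exact norm_small hσ hε hx)
  rwa [← sub_eq_add_neg] at this

lemma den_lower {σ : ℂ} {ε : ℝ} {x : ℂ} (hσ : ‖σ‖ ≤ 1) :
    Real.exp (ε * x.re) - 1 ≤ ‖Complex.exp (ε * x) - σ‖ := by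
  have h := norm_sub_norm_le (Complex.exp (ε * x)) σ
  rw [Complex.norm_exp] at h
  simp at h
  linarith

lemma den_ne {σ : ℂ} {ε : ℝ} {x : ℂ} (hσ : ‖σ‖ ≤ 1) (hε : 0 < ε) (hx : 0 < x.re) :
    Complex.exp (ε * x) - σ ≠ 0 := by
  have h := den_lower (ε := ε) (x := x) hσ
  have : 1 < Real.exp (ε * x.re) := by
    rw [Real.one_lt_exp_iff]; positivity
  intro h0
  rw [h0, norm_zero] at h
  linarith

lemma hasDeriv1 {σ : ℂ} {ε : ℝ} {x : ℂ} (hσ : ‖σ‖ ≤ 1) (hε : 0 < ε) (hx : 0 < x.re) :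
    HasDerivAt (L σ ε) (L' σ ε x) x := by
  have h1 : HasDerivAt (fun x : ℂ => 1 - σ * Complex.exp (-(ε * x)))
      (-(σ * (Complex.exp (-(ε * x)) * (-(ε * 1))))) x :=
    (((((hasDerivAt_id x).const_mul (ε : ℂ)).neg).cexp).const_mul σ).const_sub 1
  have h2 := h1.clog (slit hσ hε hx)
  refine HasDerivAt.congr_deriv (f := L σ ε) h2 ?_
  have e : Complex.exp (ε * x) ≠ 0 := Complex.exp_ne_zero _
  have d := den_ne hσ hε hx
  unfold L'
  rw [Complex.exp_neg]
  have d2 : 1 - σ * (Complex.exp (ε * x))⁻¹ ≠ 0 := by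
    intro h; apply d
    field_simp at h; simpa using h
  field_simp

lemma hasDeriv2 {σ : ℂ} {ε : ℝ} {x : ℂ} (hσ : ‖σ‖ ≤ 1) (hε : 0 < ε) (hx : 0 < x.re) :
    HasDerivAt (L' σ ε) (L'' σ ε x) x := by
  have h1 : HasDerivAt (fun x : ℂ => Complex.exp (ε * x) - σ)
      (Complex.exp (ε * x) * (ε * 1)) x :=
    (((hasDerivAt_id x).const_mul (ε : ℂ)).cexp).sub_const σ
  have h2 := (hasDerivAt_const x (σ * (ε : ℂ))).div h1 (den_ne hσ hε hx)
  refine HasDerivAt.congr_deriv (f := L' σ ε) h2 ?_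
  unfold L''
  ring

lemma bound2 {σ : ℂ} {ε : ℝ} {x : ℂ} {a : ℝ} (hσ : ‖σ‖ ≤ 1) (hε : 0 < ε) (ha : 0 < a)
    (hx : a ≤ x.re) : ‖L'' σ ε x‖ ≤ 1 / a ^ 2 := by
  have hx0 : 0 < x.re := by linarith
  set y := ε * x.re with hy
  have hy0 : 0 < y := by positivity
  have hl := den_lower (ε := ε) (x := x) hσ
  rw [← hy] at hl
  have hsh : y / 2 ≤ Real.sinh (y / 2) := Real.self_le_sinh_iff.2 (by positivity)
  have e1 : Real.exp y = Real.exp (y / 2) ^ 2 := by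
    rw [← Real.exp_nat_mul]; congr 1; push_cast; ring
  have e2 : Real.exp y - 1 = Real.exp (y / 2) * (2 * Real.sinh (y / 2)) := by
    rw [Real.sinh_eq, Real.exp_neg, e1]
    have := (Real.exp_pos (y / 2)).ne'
    field_simp
  have e3 : Real.exp (y / 2) * y ≤ Real.exp y - 1 := by
    rw [e2]; gcongr; linarith
  have hp := Real.exp_pos (y / 2)
  have e4 : Real.exp y * y ^ 2 ≤ ‖Complex.exp (ε * x) - σ‖ ^ 2 := by
    have : (Real.exp (y / 2) * y) ^ 2 ≤ ‖Complex.exp (ε * x) - σ‖ ^ 2 := by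
      gcongr; linarith
    calc _ = (Real.exp (y / 2) * y) ^ 2 := by rw [e1]; ring
      _ ≤ _ := this
  have hpos : 0 < Real.exp y * y ^ 2 := by positivity
  unfold L''
  rw [norm_div, norm_neg, norm_pow, norm_mul, norm_mul, norm_mul, Complex.norm_exp]
  have e5 : ((ε : ℂ) * x).re = y := by simp [hy]
  have e6 : ‖(ε : ℂ)‖ = ε := by simp [abs_of_pos hε]
  rw [e5, e6]
  have hax : a ^ 2 ≤ x.re ^ 2 := by gcongr
  calc _ ≤ (1 * ε * (ε * Real.exp y)) / (Real.exp y * y ^ 2) := by gcongr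
    _ = 1 / x.re ^ 2 := by rw [hy]; field_simp
    _ ≤ _ := by gcongr

lemma taylor {f f' f'' : ℂ → ℂ} {S : Set ℂ} (hS : Convex ℝ S) {M : ℝ}
    (h1 : ∀ x ∈ S, HasDerivAt f (f' x) x) (h2 : ∀ x ∈ S, HasDerivAt f' (f'' x) x)
    (hM : ∀ x ∈ S, ‖f'' x‖ ≤ M) {a b : ℂ} (ha : a ∈ S) (hb : b ∈ S) :
    ‖f b - f a - (b - a) * f' a‖ ≤ M * ‖b - a‖ ^ 2 := by
  have hM0 : 0 ≤ M := (norm_nonneg _).trans (hM a ha)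
  have hsub : segment ℝ a b ⊆ S := hS.segment_subset ha hb
  have hA : ∀ x ∈ segment ℝ a b, ‖f' x - f' a‖ ≤ M * ‖b - a‖ := by
    intro x hx
    have := hS.norm_image_sub_le_of_norm_hasDerivWithin_le
      (fun y hy => (h2 y hy).hasDerivWithinAt) hM ha (hsub hx)
    refine this.trans ?_
    gcongr
    obtain ⟨p, r, hp, hr, hpr, rfl⟩ := hx
    have : p • a + r • b - a = r • (b - a) := by
      have : p = 1 - r := by linarith
      subst this
      simp only [real_smul]; push_cast; ring
    rw [this, norm_smul, Real.norm_of_nonneg hr]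
    have : r ≤ 1 := by linarith
    nlinarith [norm_nonneg (b - a)]
  have hB := (convex_segment (𝕜 := ℝ) a b).norm_image_sub_le_of_norm_hasDerivWithin_le
    (f := fun x => f x - x * f' a) (f' := fun x => f' x - 1 * f' a)
    (fun y hy => ((h1 y (hsub hy)).sub ((hasDerivAt_id y).mul_const (f' a))).hasDerivWithinAt)
    (C := M * ‖b - a‖) (fun y hy => by simpa using hA y hy)
    (left_mem_segment ℝ a b) (right_mem_segment ℝ a b)
  calc _ = ‖f b - b * f' a - (f a - a * f' a)‖ := by congr 1; ring
    _ ≤ _ := hB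
    _ = _ := by ring

noncomputable def T (σ : ℂ) (ε : ℝ) (z : ℂ) (k : ℕ) : ℂ :=
  L σ ε (k + z) - L σ ε (k + 1) - (z - 1) * (L σ ε (k + 2) - L σ ε (k + 1))

lemma T_bound {σ : ℂ} {ε : ℝ} {z : ℂ} (hσ : ‖σ‖ ≤ 1) (hε : 0 < ε) (hz : 1 ≤ z.re) (k : ℕ) :
    ‖T σ ε z k‖ ≤ (‖z - 1‖ ^ 2 + ‖z - 1‖) * (1 / ((k : ℝ) + 1) ^ 2) := by
  have hk : (0 : ℝ) < k + 1 := by positivity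
  have ht : ∀ b : ℂ, (k : ℝ) + 1 ≤ b.re →
      ‖L σ ε b - L σ ε (k + 1) - (b - (k + 1)) * L' σ ε (k + 1)‖
        ≤ 1 / ((k : ℝ) + 1) ^ 2 * ‖b - (k + 1)‖ ^ 2 := by
    intro b hb
    refine taylor (S := {x : ℂ | (k : ℝ) + 1 ≤ x.re}) (convex_halfSpace_re_ge _)
      (fun x hx => hasDeriv1 hσ hε (lt_of_lt_of_le hk hx))
      (fun x hx => hasDeriv2 hσ hε (lt_of_lt_of_le hk hx))
      (fun x hx => bound2 hσ hε hk hx) ?_ hb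
    simp
  have h1 := ht (k + z) (by simp; linarith)
  have h2 := ht (k + 2) (by simp)
  rw [show (k : ℂ) + z - (k + 1) = z - 1 by ring] at h1
  rw [show (k : ℂ) + 2 - (k + 1) = 1 by ring] at h2
  simp only [norm_one, one_pow, mul_one, one_mul] at h2
  have e : T σ ε z k = (L σ ε (k + z) - L σ ε (k + 1) - (z - 1) * L' σ ε (k + 1))
      - (z - 1) * (L σ ε (k + 2) - L σ ε (k + 1) - L' σ ε (k + 1)) := by
    unfold T; ring
  rw [e]
  refine (norm_sub_le _ _).trans ?_
  rw [norm_mul]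
  have := mul_le_mul_of_nonneg_left h2 (norm_nonneg (z - 1))
  linarith

lemma summ_L {σ : ℂ} {ε : ℝ} {z : ℂ} (hε : 0 < ε) :
    Summable (fun k : ℕ => L σ ε (k + z)) := by
  have hq : ‖Complex.exp (-(ε : ℂ))‖ < 1 := by
    rw [Complex.norm_exp]; simpa using hε
  have h := (summable_geometric_of_norm_lt_one hq).mul_left (-(σ * Complex.exp (-(ε * z))))
  refine (Complex.summable_log_one_add_of_summable h).congr ?_
  intro k
  unfold L
  congr 1
  rw [← Complex.exp_nat_mul, show -((ε : ℂ) * (k + z)) = -(ε * z) + k * (-ε) by ring,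
    Complex.exp_add]
  ring

lemma qp_exp {σ : ℂ} {ε : ℝ} {z : ℂ} (hσ : ‖σ‖ ≤ 1) (hε : 0 < ε) (hz : 0 < z.re) :
    qPochInf (σ * Complex.exp (-(ε * z))) (Complex.exp (-(ε : ℂ))) =
      Complex.exp (∑' k : ℕ, L σ ε (k + z)) := by
  have hr : ∀ k : ℕ, 0 < ((k : ℂ) + z).re := fun k => by simp; positivity
  have h := cexp_tsum_eq_tprod (f := fun k : ℕ => 1 - σ * Complex.exp (-(ε * (k + z))))
    (fun k => slitPlane_ne_zero (slit hσ hε (hr k))) (summ_L hε)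
  unfold qPochInf
  unfold L
  rw [h]
  congr 1
  ext k
  rw [← Complex.exp_nat_mul, show -((ε : ℂ) * (k + z)) = -(ε * z) + k * (-ε) by ring,
    Complex.exp_add]
  ring

lemma qp_rep {σ : ℂ} {ε : ℝ} {z : ℂ} (hσ : ‖σ‖ ≤ 1) (hε : 0 < ε) (hz : 0 < z.re) :
    qPochInf (σ * Complex.exp (-(ε * z))) (Complex.exp (-(ε : ℂ))) /
      qPochInf (σ * Complex.exp (-(ε : ℂ))) (Complex.exp (-(ε : ℂ)))
      * Complex.exp ((z - 1) * L σ ε 1) =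
      Complex.exp (∑' k : ℕ, T σ ε z k) := by
  have h1 := qp_exp (z := 1) hσ hε (by simp)
  rw [mul_one] at h1
  rw [h1, qp_exp hσ hε hz, ← Complex.exp_sub, ← Complex.exp_add]
  congr 1
  have s1 := summ_L (σ := σ) (z := z) hε
  have s2 := summ_L (σ := σ) (z := 1) hε
  have s3 := summ_L (σ := σ) (z := 2) hε
  unfold T
  rw [(s1.sub s2).tsum_sub ((s3.sub s2).mul_left _), s1.tsum_sub s2, tsum_mul_left,
    s3.tsum_sub s2]
  have h0 := s2.tsum_eq_zero_add
  have : ∀ k : ℕ, L σ ε ((k + 1 : ℕ) + 1) = L σ ε (k + 2) := by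
    intro k; congr 1; push_cast; ring
  simp only [this] at h0
  rw [h0]
  simp only [Nat.cast_zero, zero_add]
  ring

lemma qp_funct {a q : ℂ} (hq : ‖q‖ < 1) : qPochInf a q = (1 - a) * qPochInf (a * q) q := by
  unfold qPochInf
  have h := (summable_geometric_of_norm_lt_one hq).mul_left (-a)
  have hm := Complex.multipliable_one_add_of_summable h
  have hm' : Multipliable (fun k : ℕ => 1 - a * q ^ k) := by
    refine hm.congr fun k => by ring
  have h2 := (summable_geometric_of_norm_lt_one hq).mul_left (-(a * q))
  have hm2 := Complex.multipliable_one_add_of_summable h2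
  have hm2' : Multipliable (fun k : ℕ => 1 - a * q ^ (k + 1)) := by
    refine hm2.congr fun k => by ring
  rw [tprod_eq_zero_mul' (f := fun k : ℕ => 1 - a * q ^ k) hm2']
  simp only [pow_zero, mul_one]
  congr 1
  refine tprod_congr fun k => ?_
  rw [pow_succ']
  ring

noncomputable def R (σ : ℂ) (ε : ℝ) (z : ℂ) : ℂ :=
  qPochInf (σ * Complex.exp (-(ε * z))) (Complex.exp (-(ε : ℂ))) /
      qPochInf (σ * Complex.exp (-(ε : ℂ))) (Complex.exp (-(ε : ℂ)))
      * Complex.exp ((z - 1) * L σ ε 1)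

lemma base_ne {σ : ℂ} {ε : ℝ} (hσ : ‖σ‖ ≤ 1) (hε : 0 < ε) :
    qPochInf (σ * Complex.exp (-(ε : ℂ))) (Complex.exp (-(ε : ℂ))) ≠ 0 := by
  have h1 := qp_exp (z := 1) hσ hε (by simp)
  rw [mul_one] at h1
  rw [h1]; exact Complex.exp_ne_zero _

lemma qp_eq {σ : ℂ} {ε : ℝ} (z : ℂ) (hσ : ‖σ‖ ≤ 1) (hε : 0 < ε) :
    qPochInf (σ * Complex.exp (-(ε * z))) (Complex.exp (-(ε : ℂ))) =
      R σ ε z * qPochInf (σ * Complex.exp (-(ε : ℂ))) (Complex.exp (-(ε : ℂ)))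
        * Complex.exp ((1 - z) * L σ ε 1) := by
  have h := base_ne hσ hε
  unfold R
  rw [show (1 - z) * L σ ε 1 = -((z - 1) * L σ ε 1) by ring,
    Complex.exp_neg ((z - 1) * L σ ε 1)]
  have := Complex.exp_ne_zero ((z - 1) * L σ ε 1)
  generalize Complex.exp ((z - 1) * L σ ε 1) = X at *
  generalize qPochInf (σ * Complex.exp (-(ε * z))) (Complex.exp (-(ε : ℂ))) = Y at *
  field_simp

lemma expL1 {σ : ℂ} {ε : ℝ} (hσ : ‖σ‖ ≤ 1) (hε : 0 < ε) :
    Complex.exp (L σ ε 1) = 1 - σ * Complex.exp (-(ε : ℂ)) := by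
  have := slit (x := 1) hσ hε (by simp)
  unfold L
  rw [Complex.exp_log (slitPlane_ne_zero this), mul_one]

lemma R_funct {σ : ℂ} {ε : ℝ} (z : ℂ) (hσ : ‖σ‖ ≤ 1) (hε : 0 < ε) :
    R σ ε z = (1 - σ * Complex.exp (-(ε * z))) / (1 - σ * Complex.exp (-(ε : ℂ)))
      * R σ ε (z + 1) := by
  have hq : ‖Complex.exp (-(ε : ℂ))‖ < 1 := by
    rw [Complex.norm_exp]; simpa using hε
  have h := base_ne hσ hε
  have hL := expL1 hσ hε
  have hn : 1 - σ * Complex.exp (-(ε : ℂ)) ≠ 0 := by rw [← hL]; exact Complex.exp_ne_zero _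
  unfold R
  rw [qp_funct (a := σ * Complex.exp (-(ε * z))) hq]
  rw [show σ * Complex.exp (-(ε * z)) * Complex.exp (-(ε : ℂ)) =
    σ * Complex.exp (-(ε * (z + 1))) by rw [mul_assoc, ← Complex.exp_add]; congr 2; ring]
  rw [show (z + 1 - 1) * L σ ε 1 = (z - 1) * L σ ε 1 + L σ ε 1 by ring, Complex.exp_add, hL]
  field_simp

end QG

namespace QG
open Complex Topology

lemma lim1 {ε : ℕ → ℝ} {z : ℕ → ℂ} {z0 : ℂ} (hpos : ∀ᶠ n in atTop, 0 < ε n)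
    (hε : Tendsto ε atTop (𝓝 0)) (hz : Tendsto z atTop (𝓝 z0)) :
    Tendsto (fun n => (1 - Complex.exp (-(ε n * z n))) / ε n) atTop (𝓝 z0) := by
  have hεc : Tendsto (fun n => (ε n : ℂ)) atTop (𝓝 0) := by
    have := (Complex.continuous_ofReal.tendsto 0).comp hε
    simpa [Function.comp_def] using this
  have hw : Tendsto (fun n => ‖-((ε n : ℂ) * z n)‖) atTop (𝓝 0) := by
    have := (hεc.mul hz).neg.norm
    simpa using this
  have hb : Tendsto (fun n => ε n * ‖z n‖ ^ 2) atTop (𝓝 0) := by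
    have := hε.mul (hz.norm.pow 2)
    simpa using this
  have hd : Tendsto (fun n => (1 - Complex.exp (-(ε n * z n))) / ε n - z n) atTop (𝓝 0) := by
    refine squeeze_zero_norm' ?_ hb
    filter_upwards [hpos, hw.eventually (eventually_le_nhds zero_lt_one)] with n hn h1
    have h2 := Complex.norm_exp_sub_one_sub_id_le h1
    have hne : (ε n : ℂ) ≠ 0 := by exact_mod_cast hn.ne'
    have e : (1 - Complex.exp (-(ε n * z n))) / ε n - z n =
        -((Complex.exp (-(ε n * z n)) - 1 - (-(ε n * z n))) / ε n) := by
      field_simp; ring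
    rw [e, norm_neg, norm_div]
    have e6 : ‖(ε n : ℂ)‖ = ε n := by simp [abs_of_pos hn]
    rw [e6, div_le_iff₀ hn]
    refine h2.trans ?_
    rw [norm_neg, norm_mul, e6]
    apply le_of_eq; ring
  have := hd.add hz
  simpa using this

lemma limL1 {ε : ℕ → ℝ} {z : ℕ → ℂ} {z0 : ℂ} (hpos : ∀ᶠ n in atTop, 0 < ε n)
    (hε : Tendsto ε atTop (𝓝 0)) (hz : Tendsto z atTop (𝓝 z0)) (h0 : 0 < z0.re) :
    Tendsto (fun n => L 1 (ε n) (z n) - Real.log (ε n)) atTop (𝓝 (Complex.log z0)) := by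
  have h1 := lim1 hpos hε hz
  have hs : z0 ∈ slitPlane := Or.inl h0
  have hne : z0 ≠ 0 := slitPlane_ne_zero hs
  refine (h1.clog hs).congr' ?_
  filter_upwards [hpos, h1.eventually_ne hne] with n hn hq
  have hne : (ε n : ℂ) ≠ 0 := by exact_mod_cast hn.ne'
  unfold L
  rw [show 1 - 1 * Complex.exp (-(ε n * z n)) =
    ε n * ((1 - Complex.exp (-(ε n * z n))) / ε n) by field_simp; try ring]
  rw [Complex.log_ofReal_mul hn hq]
  ring

lemma limLm {ε : ℕ → ℝ} {z : ℕ → ℂ} {z0 : ℂ}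
    (hε : Tendsto ε atTop (𝓝 0)) (hz : Tendsto z atTop (𝓝 z0)) :
    Tendsto (fun n => L (-1) (ε n) (z n)) atTop (𝓝 (Complex.log 2)) := by
  have hεc : Tendsto (fun n => (ε n : ℂ)) atTop (𝓝 0) := by
    have := (Complex.continuous_ofReal.tendsto 0).comp hε
    simpa [Function.comp_def] using this
  have h : Tendsto (fun n => 1 - (-1) * Complex.exp (-((ε n : ℂ) * z n))) atTop (𝓝 2) := by
    have := ((hεc.mul hz).neg.cexp.const_mul (-1)).const_sub 1
    convert this using 2
    norm_num
  exact h.clog (Or.inl (by norm_num))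

lemma sum_lim {σ : ℂ} (hσ : ‖σ‖ ≤ 1) {ε : ℕ → ℝ} {z : ℕ → ℂ} {z0 : ℂ} {g : ℕ → ℂ}
    (hpos : ∀ᶠ n in atTop, 0 < ε n) (hz : Tendsto z atTop (𝓝 z0)) (h0 : 1 < z0.re)
    (hg : ∀ k, Tendsto (fun n => T σ (ε n) (z n) k) atTop (𝓝 (g k))) :
    Summable g ∧ Tendsto (fun n => R σ (ε n) (z n)) atTop (𝓝 (Complex.exp (∑' k, g k))) := by
  set D := ‖z0 - 1‖ + 1 with hD
  set bound : ℕ → ℝ := fun k => (D ^ 2 + D) * (1 / ((k : ℝ) + 1) ^ 2) with hbd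
  have hre : ∀ᶠ n in atTop, 1 ≤ (z n).re := by
    have := (Complex.continuous_re.tendsto z0).comp hz
    exact (this.eventually (eventually_gt_nhds h0)).mono fun n hn => le_of_lt hn
  have hDn : ∀ᶠ n in atTop, ‖z n - 1‖ ≤ D := by
    have := (hz.sub_const 1).norm
    exact (this.eventually (eventually_lt_nhds (show ‖z0 - 1‖ < D by linarith))).mono
      fun n hn => le_of_lt hn
  have hsum : Summable bound := by
    apply Summable.mul_left
    have := (summable_nat_add_iff 1).2 (Real.summable_one_div_nat_pow.2 (one_lt_two))
    simpa using this
  have hb : ∀ᶠ n in atTop, ∀ k, ‖T σ (ε n) (z n) k‖ ≤ bound k := by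
    filter_upwards [hpos, hre, hDn] with n h1 h2 h3 k
    refine (T_bound hσ h1 h2 k).trans ?_
    simp only [hbd]
    gcongr
  constructor
  · refine Summable.of_norm_bounded hsum fun k => ?_
    exact le_of_tendsto (hg k).norm (hb.mono fun n hn => hn k)
  · have := (tendsto_tsum_of_dominated_convergence hsum hg hb).cexp
    refine this.congr' ?_
    filter_upwards [hpos, hre] with n h1 h2
    exact (qp_rep hσ h1 (by linarith)).symm

noncomputable def g1 (z : ℂ) (k : ℕ) : ℂ :=
  Complex.log (k + z) - Complex.log (k + 1)
    - (z - 1) * (Complex.log (k + 2) - Complex.log (k + 1))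

lemma exp_g1 {z : ℂ} (hz : 0 < z.re) (n : ℕ) :
    Complex.exp (∑ k ∈ Finset.range n, g1 z k) =
      (∏ k ∈ Finset.range n, (z + k)) / (n.factorial : ℂ) *
        Complex.exp ((1 - z) * Complex.log (n + 1)) := by
  induction n with
  | zero => simp
  | succ n ih =>
    rw [Finset.sum_range_succ, Complex.exp_add, ih, Finset.prod_range_succ, Nat.factorial_succ]
    have h1 : (n : ℂ) + z ≠ 0 := by
      intro h
      have := congrArg Complex.re h
      simp at this
      have : (0 : ℝ) ≤ n := by positivity
      linarith
    have h2 : (n : ℂ) + 1 ≠ 0 := by exact_mod_cast Nat.succ_ne_zero n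
    unfold g1
    rw [show Complex.log (n + z) - Complex.log (n + 1)
      - (z - 1) * (Complex.log (n + 2) - Complex.log (n + 1)) =
      Complex.log (n + z) - Complex.log (n + 1)
      + ((1 - z) * Complex.log (n + 2) - (1 - z) * Complex.log (n + 1)) by ring]
    rw [Complex.exp_add, Complex.exp_sub, Complex.exp_sub, Complex.exp_log h1, Complex.exp_log h2]
    push_cast
    rw [show (n : ℂ) + 1 + 1 = n + 2 by ring]
    have h3 := Complex.exp_ne_zero ((1 - z) * Complex.log (n + 1))
    have h4 : (n.factorial : ℂ) ≠ 0 := by exact_mod_cast n.factorial_ne_zero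
    generalize Complex.exp ((1 - z) * Complex.log (n + 1)) = X at *
    generalize Complex.exp ((1 - z) * Complex.log (n + 2)) = Y at *
    field_simp
    ring

lemma exp_tsum_g1 {z : ℂ} (hz : 0 < z.re) (hs : Summable (g1 z)) :
    Complex.exp (∑' k, g1 z k) = (Complex.Gamma z)⁻¹ := by
  have h1 : Tendsto (fun n : ℕ => Complex.exp (∑ k ∈ Finset.range (n + 1), g1 z k)) atTop
      (𝓝 (Complex.exp (∑' k, g1 z k))) :=
    ((hs.hasSum.tendsto_sum_nat).comp (tendsto_add_atTop_nat 1)).cexp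
  have hG : Complex.Gamma z ≠ 0 := Complex.Gamma_ne_zero_of_re_pos hz
  have h2 := (Complex.GammaSeq_tendsto_Gamma z).inv₀ hG
  have hr : Tendsto (fun n : ℕ => (n : ℝ) / (n + 2)) atTop (𝓝 1) := by
    simpa using tendsto_natCast_div_add_atTop (2 : ℝ)
  have hl : Tendsto (fun n : ℕ => ((Real.log ((n : ℝ) / (n + 2)) : ℝ) : ℂ)) atTop (𝓝 0) := by
    have := (Complex.continuous_ofReal.tendsto _).comp (hr.log one_ne_zero)
    simpa [Function.comp_def] using this
  have he : Tendsto (fun n : ℕ => Complex.exp (z * ((Real.log ((n : ℝ) / (n + 2)) : ℝ) : ℂ)))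
      atTop (𝓝 1) := by
    have := (hl.const_mul z).cexp
    simpa using this
  have hq : Tendsto (fun n : ℕ => ((((n : ℝ) + 2) / (n + 1) : ℝ) : ℂ)) atTop (𝓝 1) := by
    have h3 : Tendsto (fun n : ℕ => ((n : ℝ) + 2) / (n + 1)) atTop (𝓝 1) := by
      have := (tendsto_one_div_add_atTop_nhds_zero_nat (𝕜 := ℝ)).const_add 1
      rw [add_zero] at this
      refine this.congr fun n => ?_
      have : (n : ℝ) + 1 ≠ 0 := by positivity
      field_simp
      ring
    have := (Complex.continuous_ofReal.tendsto _).comp h3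
    simpa only [Function.comp_def, Complex.ofReal_one] using this
  have h5 := (h2.mul he).mul hq
  rw [mul_one, mul_one] at h5
  refine tendsto_nhds_unique h1 (h5.congr' ?_)
  filter_upwards [eventually_gt_atTop 0] with n hn
  rw [exp_g1 hz]
  unfold Complex.GammaSeq
  have hn0 : (n : ℂ) ≠ 0 := by exact_mod_cast hn.ne'
  have hnr : (0 : ℝ) < n := by exact_mod_cast hn
  rw [Complex.cpow_def_of_ne_zero hn0, Real.log_div hnr.ne' (by positivity)]
  push_cast
  rw [show ((Real.log ((n : ℝ) + 2) : ℝ) : ℂ) = Complex.log (n + 2) by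
    rw [Complex.ofReal_log (by positivity)]; push_cast; rfl]
  push_cast
  rw [show (n : ℂ) + 1 + 1 = n + 2 by ring, Nat.factorial_succ]
  have h22 : (n : ℂ) + 2 ≠ 0 := by exact_mod_cast (show n + 2 ≠ 0 by omega)
  have h21 : (n : ℂ) + 1 ≠ 0 := by exact_mod_cast (show n + 1 ≠ 0 by omega)
  rw [show (1 - z) * Complex.log (n + 2) = Complex.log (n + 2) - z * Complex.log (n + 2) by ring,
    mul_sub, mul_comm (Complex.log n) z, Complex.exp_sub, Complex.exp_sub, Complex.exp_log h22]
  push_cast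
  have h3 := Complex.exp_ne_zero (z * Complex.log n)
  have h4 := Complex.exp_ne_zero (z * Complex.log (n + 2))
  have h6 : (n.factorial : ℂ) ≠ 0 := by exact_mod_cast n.factorial_ne_zero
  generalize Complex.exp (z * Complex.log n) = X at *
  generalize Complex.exp (z * Complex.log (n + 2)) = Y at *
  rw [inv_div]
  field_simp

lemma main_pos_base {ε : ℕ → ℝ} {z : ℕ → ℂ} {z0 : ℂ} (hpos : ∀ᶠ n in atTop, 0 < ε n)
    (hε : Tendsto ε atTop (𝓝 0)) (hz : Tendsto z atTop (𝓝 z0)) (h0 : 1 < z0.re) :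
    Tendsto (fun n => R 1 (ε n) (z n)) atTop (𝓝 ((Complex.Gamma z0)⁻¹)) := by
  have hg : ∀ k, Tendsto (fun n => T 1 (ε n) (z n) k) atTop (𝓝 (g1 z0 k)) := by
    intro k
    have hk : (0 : ℝ) ≤ k := by positivity
    have a1 := limL1 hpos hε (hz.const_add (k : ℂ)) (by simp; linarith)
    have a2 := limL1 hpos hε (tendsto_const_nhds (x := (k : ℂ) + 1)) (by simp; linarith)
    have a3 := limL1 hpos hε (tendsto_const_nhds (x := (k : ℂ) + 2)) (by simp; linarith)
    have := (a1.sub a2).sub ((hz.sub_const 1).mul (a3.sub a2))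
    refine this.congr fun n => ?_
    unfold T; ring
  obtain ⟨h1, h2⟩ := sum_lim (by simp) hpos hz h0 hg
  rwa [exp_tsum_g1 (by linarith) h1] at h2

lemma main_neg_base {ε : ℕ → ℝ} {z : ℕ → ℂ} {z0 : ℂ} (hpos : ∀ᶠ n in atTop, 0 < ε n)
    (hε : Tendsto ε atTop (𝓝 0)) (hz : Tendsto z atTop (𝓝 z0)) (h0 : 1 < z0.re) :
    Tendsto (fun n => R (-1) (ε n) (z n)) atTop (𝓝 1) := by
  have hg : ∀ k : ℕ, Tendsto (fun n => T (-1) (ε n) (z n) k) atTop (𝓝 ((fun _ => 0) k)) := by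
    intro k
    have a1 := limLm hε (hz.const_add (k : ℂ))
    have a2 := limLm hε (tendsto_const_nhds (x := (k : ℂ) + 1))
    have a3 := limLm hε (tendsto_const_nhds (x := (k : ℂ) + 2))
    have := (a1.sub a2).sub ((hz.sub_const 1).mul (a3.sub a2))
    simpa [T] using this
  obtain ⟨h1, h2⟩ := sum_lim (by simp) hpos hz h0 hg
  simpa using h2

lemma main_pos {ε : ℕ → ℝ} {z : ℕ → ℂ} {z0 : ℂ} (hpos : ∀ᶠ n in atTop, 0 < ε n)
    (hε : Tendsto ε atTop (𝓝 0)) (hz : Tendsto z atTop (𝓝 z0)) :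
    Tendsto (fun n => R 1 (ε n) (z n)) atTop (𝓝 ((Complex.Gamma z0)⁻¹)) := by
  obtain ⟨m, hm⟩ := exists_nat_gt (1 - z0.re)
  induction m generalizing z z0 with
  | zero => exact main_pos_base hpos hε hz (by simp at hm; linarith)
  | succ m ih =>
    have h1 := ih (hz.add_const 1) (by push_cast at hm; simp; linarith)
    have h2 := lim1 hpos hε hz
    have h3 := lim1 hpos hε (tendsto_const_nhds (x := (1 : ℂ)))
    have h4 := (h2.div h3 one_ne_zero).mul h1
    rw [div_one, ← Complex.one_div_Gamma_eq_self_mul_one_div_Gamma_add_one] at h4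
    refine h4.congr' ?_
    filter_upwards [hpos] with n hn
    have hne : (ε n : ℂ) ≠ 0 := by exact_mod_cast hn.ne'
    rw [R_funct (z n) (by simp) hn]
    simp only [Pi.div_apply, mul_one, one_mul]
    rw [div_div_div_cancel_right₀ hne]

lemma main_neg {ε : ℕ → ℝ} {z : ℕ → ℂ} {z0 : ℂ} (hpos : ∀ᶠ n in atTop, 0 < ε n)
    (hε : Tendsto ε atTop (𝓝 0)) (hz : Tendsto z atTop (𝓝 z0)) :
    Tendsto (fun n => R (-1) (ε n) (z n)) atTop (𝓝 1) := by
  obtain ⟨m, hm⟩ := exists_nat_gt (1 - z0.re)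
  induction m generalizing z z0 with
  | zero => exact main_neg_base hpos hε hz (by simp at hm; linarith)
  | succ m ih =>
    have h1 := ih (hz.add_const 1) (by push_cast at hm; simp; linarith)
    have hεc : Tendsto (fun n => (ε n : ℂ)) atTop (𝓝 0) := by
      have := (Complex.continuous_ofReal.tendsto 0).comp hε
      simpa [Function.comp_def] using this
    have h2 := ((hεc.mul hz).neg.cexp.const_mul (-1)).const_sub 1
    have h3 := (hεc.neg.cexp.const_mul (-1)).const_sub 1
    have h4 := (h2.div h3 (by norm_num)).mul h1
    have e : (1 - -1 * Complex.exp (-(0 * z0))) / (1 - -1 * Complex.exp (-0)) * 1 = 1 := by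
      norm_num
    rw [e] at h4
    refine h4.congr' ?_
    filter_upwards [hpos] with n hn
    rw [R_funct (z n) (by simp) hn]
    simp only [Pi.div_apply]

lemma theta_lim {ρ : ℝ} (hρ : 0 < ρ) :
    Tendsto (fun N : ℕ => Real.arccos (1 - ρ / (2 * (N : ℝ))) / (2 / Real.sqrt N)) atTop
      (𝓝 (Real.sqrt ρ / 2)) := by
  have hN : Tendsto (fun N : ℕ => Real.sqrt N) atTop atTop :=
    Real.tendsto_sqrt_atTop.comp tendsto_natCast_atTop_atTop
  have hy : Tendsto (fun N : ℕ => Real.sqrt ρ / 2 / Real.sqrt N) atTop (𝓝 0) :=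
    hN.const_div_atTop _
  have hsρ : 0 < Real.sqrt ρ := Real.sqrt_pos.2 hρ
  have hd : HasDerivAt Real.arcsin 1 0 := by
    simpa using Real.hasDerivAt_arcsin (x := 0) (by norm_num) (by norm_num)
  have hs := hd.tendsto_slope_zero
  have hy' : Tendsto (fun N : ℕ => Real.sqrt ρ / 2 / Real.sqrt N) atTop (𝓝[≠] 0) := by
    refine tendsto_nhdsWithin_iff.2 ⟨hy, ?_⟩
    filter_upwards [eventually_gt_atTop 0] with N h
    have : 0 < Real.sqrt N := Real.sqrt_pos.2 (by exact_mod_cast h)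
    exact (div_pos (by positivity) this).ne'
  have h1 := (hs.comp hy').mul_const (Real.sqrt ρ / 2)
  rw [one_mul] at h1
  refine h1.congr' ?_
  filter_upwards [eventually_gt_atTop 0, hy.eventually (eventually_le_nhds zero_lt_one)] with N h hle
  have hs0 : 0 < Real.sqrt N := Real.sqrt_pos.2 (by exact_mod_cast h)
  have hN0 : (0 : ℝ) < N := by exact_mod_cast h
  have hy0 : 0 < Real.sqrt ρ / 2 / Real.sqrt N := by positivity
  have key : Real.arccos (1 - ρ / (2 * (N : ℝ))) =
      2 * Real.arcsin (Real.sqrt ρ / 2 / Real.sqrt N) := by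
    have e : 1 - ρ / (2 * (N : ℝ)) = Real.cos (2 * Real.arcsin (Real.sqrt ρ / 2 / Real.sqrt N)) := by
      rw [Real.cos_two_mul, Real.cos_sq', Real.sin_arcsin (by linarith) hle, div_pow, div_pow,
        Real.sq_sqrt hρ.le, Real.sq_sqrt hN0.le]
      field_simp
      ring
    rw [e, Real.arccos_cos]
    · have := Real.arcsin_nonneg.2 hy0.le
      linarith
    · have := Real.arcsin_le_pi_div_two (Real.sqrt ρ / 2 / Real.sqrt N)
      linarith
  rw [key]
  simp only [Function.comp, zero_add, Real.arcsin_zero, sub_zero, smul_eq_mul]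
  field_simp

end QG

namespace QG
open Complex Topology

lemma alg {P M r1 r2 r3 r4 r5 r6 r7 r8 f1 e2 e3 f4 f5 e6 e7 e8 K1 K2 K3 E r0 f0
    s1 d1 t1 g1 s2 d2 s3 d3 s1' d1' t1' g1' s2' d2' s3' d3' : ℂ}
    (hP : P ≠ 0) (hM : M ≠ 0) (he : e2 * e3 * e6 * e7 * e8 ≠ 0) (hf : f1 * f4 * f5 ≠ 0)
    (h1 : e2 * e3 * e6 * e7 * e8 * E = d1 * d2 * d3 * d1' * d2' * d3')
    (h2 : f1 * f4 * f5 = f0 * g1 * g1') :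
    (P * (r1 * M * f1) * (r2 * P * e2) * (r3 * P * e3) * (r4 * M * f4) * (r5 * M * f5) *
      (r6 * P * e6) * (r7 * P * e7) * (r8 * P * e8)) /
    (K1 * K2 * K3 * (r0 * M * f0) *
      (((s1 * P * d1) * (t1 * M * g1) * (s2 * P * d2) * (s3 * P * d3)) *
       ((s1' * P * d1') * (t1' * M * g1') * (s2' * P * d2') * (s3' * P * d3')))) =
    (r1 * r4 * r5 * (r2 * r3 * r6 * (r7 * r8))) /
      (K1 * K2 * E * K3 * (r0 * t1 * t1') * ((s1 * s1') * (s2 * s2') * (s3 * s3'))) := by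
  have hW : P ^ 6 * M ^ 3 * (e2 * e3 * e6 * e7 * e8) * (f1 * f4 * f5) ≠ 0 :=
    mul_ne_zero (mul_ne_zero (mul_ne_zero (pow_ne_zero _ hP) (pow_ne_zero _ hM)) he) hf
  rw [← mul_div_mul_right (r1 * r4 * r5 * (r2 * r3 * r6 * (r7 * r8))) _ hW]
  congr 1
  · ring
  · calc _ = K1 * K2 * K3 * (r0 * t1 * t1') * ((s1 * s1') * (s2 * s2') * (s3 * s3')) * (P ^ 6 * M ^ 3)
          * (d1 * d2 * d3 * d1' * d2' * d3') * (f0 * g1 * g1') := by ring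
      _ = _ := by rw [← h1, ← h2]; ring

noncomputable def ep (N : ℕ) : ℝ := 2 / Real.sqrt N

noncomputable def cc (ρ : ℝ) (N : ℕ) : ℝ :=
  Real.arccos (1 - ρ / (2 * (N : ℝ))) / (2 / Real.sqrt N)

lemma ep_pos {N : ℕ} (h : 0 < N) : 0 < ep N := by
  have : 0 < Real.sqrt N := Real.sqrt_pos.2 (by exact_mod_cast h)
  unfold ep; positivity

lemma ep_lim : Tendsto ep atTop (𝓝 0) := by
  have hN : Tendsto (fun N : ℕ => Real.sqrt N) atTop atTop :=
    Real.tendsto_sqrt_atTop.comp tendsto_natCast_atTop_atTop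
  exact hN.const_div_atTop _

lemma qN_eq (N : ℕ) : ((qN N : ℝ) : ℂ) = Complex.exp (-(ep N : ℂ)) := by
  unfold qN ep
  push_cast
  congr 1
  ring

lemma qpow_eq (N : ℕ) (x : ℝ) : qpow N x = Complex.exp (-((ep N : ℂ) * x)) := by
  unfold qpow ep
  push_cast
  congr 1
  ring

lemma theta_eq {N : ℕ} (h : 0 < N) (ρ : ℝ) :
    ((Real.arccos (1 - ρ / (2 * (N : ℝ))) : ℝ) : ℂ) = ep N * cc ρ N := by
  rw [← Complex.ofReal_mul]
  congr 1
  have : 0 < Real.sqrt N := Real.sqrt_pos.2 (by exact_mod_cast h)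
  unfold ep cc
  field_simp

lemma A_pos (N : ℕ) (x : ℝ) : qpow N x = 1 * Complex.exp (-((ep N : ℂ) * x)) := by
  rw [qpow_eq, one_mul]

lemma A_neg (N : ℕ) (x : ℝ) : -(qpow N x) = (-1) * Complex.exp (-((ep N : ℂ) * x)) := by
  rw [qpow_eq]; ring

lemma B_p {N : ℕ} (h : 0 < N) (ρ x : ℝ) :
    qpow N x * eI (Real.arccos (1 - ρ / (2 * (N : ℝ)))) =
      1 * Complex.exp (-((ep N : ℂ) * (x - cc ρ N * I))) := by
  rw [qpow_eq, eI, theta_eq h, ← Complex.exp_add, one_mul]; congr 1; ring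

lemma B_m {N : ℕ} (h : 0 < N) (ρ x : ℝ) :
    qpow N x * eI (-(Real.arccos (1 - ρ / (2 * (N : ℝ))))) =
      1 * Complex.exp (-((ep N : ℂ) * (x + cc ρ N * I))) := by
  rw [qpow_eq, eI, Complex.ofReal_neg, theta_eq h, ← Complex.exp_add, one_mul]; congr 1; ring

lemma C_p {N : ℕ} (h : 0 < N) (ρ x : ℝ) :
    -(qpow N x) * eI (Real.arccos (1 - ρ / (2 * (N : ℝ)))) =
      (-1) * Complex.exp (-((ep N : ℂ) * (x - cc ρ N * I))) := by
  rw [neg_mul, B_p h]; ring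

lemma C_m {N : ℕ} (h : 0 < N) (ρ x : ℝ) :
    -(qpow N x) * eI (-(Real.arccos (1 - ρ / (2 * (N : ℝ))))) =
      (-1) * Complex.exp (-((ep N : ℂ) * (x + cc ρ N * I))) := by
  rw [neg_mul, B_m h]; ring

lemma D_p {N : ℕ} (h : 0 < N) (ρ : ℝ) :
    eI (2 * Real.arccos (1 - ρ / (2 * (N : ℝ)))) =
      1 * Complex.exp (-((ep N : ℂ) * (-(2 * cc ρ N * I)))) := by
  rw [eI, Complex.ofReal_mul, theta_eq h, one_mul]; congr 1; push_cast; ring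

lemma D_m {N : ℕ} (h : 0 < N) (ρ : ℝ) :
    eI (-2 * Real.arccos (1 - ρ / (2 * (N : ℝ)))) =
      1 * Complex.exp (-((ep N : ℂ) * (2 * cc ρ N * I))) := by
  rw [eI, Complex.ofReal_mul, theta_eq h, one_mul]; congr 1; push_cast; ring

lemma pref {ρ : ℝ} (hρ : 0 < ρ) :
    Tendsto (fun N : ℕ => Complex.ofReal (4 * Real.pi * (N : ℝ)) *
      Complex.ofReal (Real.sqrt (ρ / (N : ℝ))) * (1 - 1 * Complex.exp (-(ep N : ℂ))) *
      Complex.ofReal (Real.sqrt (1 - ρ / (4 * (N : ℝ))))) atTop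
      (𝓝 (Complex.ofReal (8 * Real.pi * Real.sqrt ρ))) := by
  have hpos : ∀ᶠ N in atTop, 0 < ep N := by
    filter_upwards [eventually_gt_atTop 0] with N h using ep_pos h
  have h1 := lim1 hpos ep_lim (tendsto_const_nhds (x := (1 : ℂ)))
  have h2 : Tendsto (fun N : ℕ => Real.sqrt (1 - ρ / (4 * (N : ℝ)))) atTop (𝓝 1) := by
    have h3 : Tendsto (fun N : ℕ => (4 * (N : ℝ))) atTop atTop :=
      tendsto_natCast_atTop_atTop.const_mul_atTop (by norm_num)
    have := ((h3.const_div_atTop ρ).const_sub 1).sqrt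
    simpa using this
  have h3 := (Complex.continuous_ofReal.tendsto _).comp h2
  have h4 := (h1.const_mul (Complex.ofReal (8 * Real.pi * Real.sqrt ρ))).mul h3
  simp only [Complex.ofReal_one, mul_one, Function.comp_def] at h4
  refine h4.congr' ?_
  filter_upwards [eventually_gt_atTop 0] with N h
  have hN0 : (0 : ℝ) < N := by exact_mod_cast h
  have hs0 : 0 < Real.sqrt N := Real.sqrt_pos.2 hN0
  congr 1
  have hep := (ep_pos h).ne'
  have hepc : (ep N : ℂ) ≠ 0 := by exact_mod_cast hep
  rw [one_mul, ← Complex.ofReal_mul]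
  have key : 4 * Real.pi * (N : ℝ) * Real.sqrt (ρ / N) = 8 * Real.pi * Real.sqrt ρ / ep N := by
    rw [Real.sqrt_div hρ.le]
    unfold ep
    have := Real.sq_sqrt hN0.le
    field_simp
    rw [this]; ring
  rw [key, Complex.ofReal_div]
  field_simp

lemma Gamma_ne {a b : ℝ} (hb : b ≠ 0) : Complex.Gamma ((a : ℂ) + b * I) ≠ 0 := by
  apply Complex.Gamma_ne_zero
  intro m h
  have := congrArg Complex.im h
  simp at this
  exact hb this

lemma GammaSq_ne {a b : ℝ} (hb : b ≠ 0) : GammaSq a b ≠ 0 := by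
  unfold GammaSq
  refine mul_ne_zero (Gamma_ne hb) ?_
  have := Gamma_ne (a := a) (neg_ne_zero.2 hb)
  rwa [Complex.ofReal_neg, neg_mul, ← sub_eq_add_neg] at this

end QG

theorem statement9 (u v w s t ρ : ℝ) (j : ℕ) (huv : 0 < u + v) (hw : 0 < w) (hst : s < t)
    (hu : u - t / 2 < 0) (hρ : 0 < ρ) (hj : (j : ℝ) ≤ -u + t / 2) :
    Tendsto (fun N : ℕ =>
      (qPochInf (Complex.ofReal (qN N)) (qN N) * qPochInf (-(qpow N (v + w + s))) (qN N) *
       qPochInf (qpow N (j + v + u)) (qN N) * qPochInf (qpow N (v - j - u + t)) (qN N) *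
       qPochInf (-(qpow N (w + j + u))) (qN N) * qPochInf (-(qpow N (w - j - u + t))) (qN N) *
       qPochInf (qpow N (t - s)) (qN N) *
       qPochInf (eI (2 * Real.arccos (1 - ρ / (2 * (N : ℝ))))) (qN N) *
       qPochInf (eI (-2 * Real.arccos (1 - ρ / (2 * (N : ℝ))))) (qN N)) /
      (Complex.ofReal (4 * Real.pi * (N : ℝ)) * Complex.ofReal (Real.sqrt (ρ / (N : ℝ))) *
       Complex.ofReal (Real.sqrt (1 - ρ / (4 * (N : ℝ)))) *
       qPochInf (-(qpow N (v + w + t))) (qN N) *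
       ((qPochInf (qpow N (v + s / 2) * eI (Real.arccos (1 - ρ / (2 * (N : ℝ))))) (qN N) *
         qPochInf (-(qpow N (w + s / 2)) * eI (Real.arccos (1 - ρ / (2 * (N : ℝ))))) (qN N) *
         qPochInf (qpow N (j + u - s / 2) * eI (Real.arccos (1 - ρ / (2 * (N : ℝ))))) (qN N) *
         qPochInf (qpow N (t - s / 2 - j - u) * eI (Real.arccos (1 - ρ / (2 * (N : ℝ))))) (qN N)) *
        (qPochInf (qpow N (v + s / 2) * eI (-(Real.arccos (1 - ρ / (2 * (N : ℝ)))))) (qN N) *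
         qPochInf (-(qpow N (w + s / 2)) * eI (-(Real.arccos (1 - ρ / (2 * (N : ℝ)))))) (qN N) *
         qPochInf (qpow N (j + u - s / 2) * eI (-(Real.arccos (1 - ρ / (2 * (N : ℝ)))))) (qN N) *
         qPochInf (qpow N (t - s / 2 - j - u) * eI (-(Real.arccos (1 - ρ / (2 * (N : ℝ)))))) (qN N)))))
      atTop
      (nhds (GammaSq (v + s / 2) (Real.sqrt ρ / 2) * GammaSq ((j : ℝ) + u - s / 2) (Real.sqrt ρ / 2) *
        GammaSq (t - s / 2 - j - u) (Real.sqrt ρ / 2) /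
        (Complex.ofReal (8 * Real.pi * Real.sqrt ρ) * Complex.Gamma ((j + v + u : ℝ) : ℂ) *
         Complex.Gamma ((v - j - u + t : ℝ) : ℂ) * Complex.Gamma ((t - s : ℝ) : ℂ) *
         GammaSq 0 (Real.sqrt ρ)))) := by
  have hpos : ∀ᶠ N in atTop, 0 < QG.ep N := by
    filter_upwards [eventually_gt_atTop 0] with N h using QG.ep_pos h
  have hlim := QG.ep_lim
  have hc : Tendsto (fun N : ℕ => (QG.cc ρ N : ℂ)) atTop (nhds ((Real.sqrt ρ / 2 : ℝ) : ℂ)) :=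
    (Complex.continuous_ofReal.tendsto _).comp (QG.theta_lim hρ)
  have hsρ : 0 < Real.sqrt ρ := Real.sqrt_pos.2 hρ
  have hconst : ∀ x : ℝ, Tendsto (fun _ : ℕ => (x : ℂ)) atTop (nhds (x : ℂ)) :=
    fun x => tendsto_const_nhds
  have zp : ∀ x : ℝ, Tendsto (fun N : ℕ => (x : ℂ) - QG.cc ρ N * Complex.I) atTop
      (nhds ((x : ℂ) - ((Real.sqrt ρ / 2 : ℝ) : ℂ) * Complex.I)) :=
    fun x => (hconst x).sub (hc.mul_const _)
  have zm : ∀ x : ℝ, Tendsto (fun N : ℕ => (x : ℂ) + QG.cc ρ N * Complex.I) atTop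
      (nhds ((x : ℂ) + ((Real.sqrt ρ / 2 : ℝ) : ℂ) * Complex.I)) :=
    fun x => (hconst x).add (hc.mul_const _)
  have z7 : Tendsto (fun N : ℕ => -(2 * (QG.cc ρ N : ℂ) * Complex.I)) atTop
      (nhds (((0 : ℝ) : ℂ) - (Real.sqrt ρ : ℂ) * Complex.I)) := by
    have := ((hc.const_mul 2).mul_const Complex.I).neg
    convert this using 2
    push_cast; ring
  have z8 : Tendsto (fun N : ℕ => 2 * (QG.cc ρ N : ℂ) * Complex.I) atTop
      (nhds (((0 : ℝ) : ℂ) + (Real.sqrt ρ : ℂ) * Complex.I)) := by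
    have := (hc.const_mul 2).mul_const Complex.I
    convert this using 2
    push_cast; ring
  have pp : ∀ x : ℝ, _ := fun x => QG.main_pos hpos hlim (hconst x)
  have pm : ∀ x : ℝ, _ := fun x => QG.main_neg hpos hlim (hconst x)
  have sq : ∀ x : ℝ, Tendsto (fun N : ℕ =>
      QG.R 1 (QG.ep N) ((x : ℂ) - QG.cc ρ N * Complex.I) *
      QG.R 1 (QG.ep N) ((x : ℂ) + QG.cc ρ N * Complex.I)) atTop
      (nhds ((GammaSq x (Real.sqrt ρ / 2))⁻¹)) := by
    intro x
    have := (QG.main_pos hpos hlim (zp x)).mul (QG.main_pos hpos hlim (zm x))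
    convert this using 2
    unfold GammaSq
    rw [mul_inv, mul_comm]
  have sq0 : Tendsto (fun N : ℕ =>
      QG.R 1 (QG.ep N) (-(2 * (QG.cc ρ N : ℂ) * Complex.I)) *
      QG.R 1 (QG.ep N) (2 * (QG.cc ρ N : ℂ) * Complex.I)) atTop
      (nhds ((GammaSq 0 (Real.sqrt ρ))⁻¹)) := by
    have := (QG.main_pos hpos hlim z7).mul (QG.main_pos hpos hlim z8)
    convert this using 2
    unfold GammaSq
    rw [mul_inv, mul_comm]
  have hnum := (((pm (v + w + s)).mul (pm (w + j + u))).mul (pm (w - j - u + t))).mul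
    ((((pp (j + v + u)).mul (pp (v - j - u + t))).mul (pp (t - s))).mul sq0)
  have hden := ((QG.pref hρ).mul (((pm (v + w + t)).mul
    (QG.main_neg hpos hlim (zp (w + s / 2)))).mul (QG.main_neg hpos hlim (zm (w + s / 2))))).mul
    (((sq (v + s / 2)).mul (sq (j + u - s / 2))).mul (sq (t - s / 2 - j - u)))
  have hb : Real.sqrt ρ / 2 ≠ 0 := by positivity
  have hfin := hnum.div hden (by
    have h8 : Complex.ofReal (8 * Real.pi * Real.sqrt ρ) ≠ 0 := by
      have : 8 * Real.pi * Real.sqrt ρ ≠ 0 := by have := Real.pi_pos; positivity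
      exact_mod_cast this
    have a1 := QG.GammaSq_ne (a := v + s / 2) hb
    have a2 := QG.GammaSq_ne (a := j + u - s / 2) hb
    have a3 := QG.GammaSq_ne (a := t - s / 2 - j - u) hb
    simp only [mul_one]
    exact mul_ne_zero h8 (mul_ne_zero (mul_ne_zero (inv_ne_zero a1) (inv_ne_zero a2))
      (inv_ne_zero a3)))
  have hval : ∀ g1 g2 g3 k a b c g0 : ℂ,
      1 * 1 * 1 * (a⁻¹ * b⁻¹ * c⁻¹ * g0⁻¹) / (k * (1 * 1 * 1) * (g1⁻¹ * g2⁻¹ * g3⁻¹)) =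
      g1 * g2 * g3 / (k * a * b * c * g0) := by
    intro g1 g2 g3 k a b c g0
    simp only [div_eq_mul_inv, mul_inv, inv_inv, one_mul, mul_one]
    ring
  rw [hval] at hfin
  refine hfin.congr' ?_
  filter_upwards [eventually_gt_atTop 0] with N hN
  have hε := QG.ep_pos hN
  have n1 : ‖(1 : ℂ)‖ ≤ 1 := by simp
  have n2 : ‖(-1 : ℂ)‖ ≤ 1 := by simp
  simp only [Pi.div_apply]
  rw [QG.D_p hN, QG.D_m hN, QG.B_p hN, QG.B_p hN, QG.B_p hN, QG.B_m hN, QG.B_m hN, QG.B_m hN,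
    QG.C_p hN, QG.C_m hN, QG.A_neg, QG.A_neg, QG.A_neg, QG.A_neg, QG.A_pos, QG.A_pos, QG.A_pos,
    QG.qN_eq]
  rw [show qPochInf (Complex.exp (-(QG.ep N : ℂ))) (Complex.exp (-(QG.ep N : ℂ))) =
    qPochInf (1 * Complex.exp (-(QG.ep N : ℂ))) (Complex.exp (-(QG.ep N : ℂ))) by rw [one_mul]]
  simp only [QG.qp_eq _ n1 hε, QG.qp_eq _ n2 hε]
  symm
  refine QG.alg (QG.base_ne n1 hε) (QG.base_ne n2 hε) ?_ ?_ ?_ ?_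
  · simp only [← Complex.exp_add]; exact Complex.exp_ne_zero _
  · simp only [← Complex.exp_add]; exact Complex.exp_ne_zero _
  · rw [← QG.expL1 n1 hε]
    simp only [← Complex.exp_add]
    congr 1
    push_cast
    ring
  · simp only [← Complex.exp_add]
    congr 1
    push_cast
    ring
end

section
/- Fix real numbers u, v, w, r, t with u+v > 0, w > 0, r > 0, −2w < t < 2r and u − t/2 < 0. With q = q_N = exp(−2/√N), the limit as N → ∞ of N^{u+v} · (q^{−2u+t};q)_∞ (−q^{v+w+t};q)_∞ (−q^{v+r};q)_∞ (q^{w+r};q)_∞ / [ (q^{v−u+t};q)_∞ (−q^{w−u+t};q)_∞ (−q^{r−u};q)_∞ (q^{u+v+w+r};q)_∞ ] exists and equals Γ(u+v+w+r) Γ(v−u+t) / ( Γ(−2u+t) Γ(w+r) ). -/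
open Filter

open Topology

lemma key_bounds {c : ℝ} {g : ℝ → ℝ} (hg : ConvexOn ℝ (Set.Ioi c) g)
    (hs : ∀ y, c < y → Summable (fun k : ℕ => g (y + k))) {y δ : ℝ} (hy : c < y - 1) (hδ : 0 < δ) :
    -(δ * g (y - 1)) ≤ (∑' k : ℕ, g (y + δ + k)) - ∑' k : ℕ, g (y + k) ∧
    (∑' k : ℕ, g (y + δ + k)) - ∑' k : ℕ, g (y + k) ≤ -(δ * g (y + δ)) := by
  have step : ∀ z, c < z → (∑' k : ℕ, g (z + k)) = g z + ∑' k : ℕ, g (z + 1 + k) := by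
    intro z hz
    rw [(hs z hz).tsum_eq_zero_add]
    simp only [Nat.cast_zero, add_zero, Nat.cast_add, Nat.cast_one]
    congr 2
    ext k
    ring_nf
  have h1 := step (y - 1) hy
  have h2 := step (y + δ) (by linarith)
  rw [sub_add_cancel] at h1
  have s0 := hs (y-1) hy
  have s1 := hs y (by linarith)
  have s2 := hs (y+δ) (by linarith)
  have s3 := hs (y+δ+1) (by linarith)
  have e1 : ∑' k : ℕ, δ * (g (y + k) - g (y - 1 + k)) ≤ ∑' k : ℕ, (g (y + δ + k) - g (y + k)) := by
    refine Summable.tsum_le_tsum (fun k => ?_) ((s1.sub s0).mul_left δ) (s2.sub s1)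
    have hk : (0:ℝ) ≤ k := Nat.cast_nonneg k
    have := hg.slope_mono_adjacent (x := y - 1 + k) (y := y + k) (z := y + δ + k)
      (by simp only [Set.mem_Ioi]; linarith) (by simp only [Set.mem_Ioi]; linarith) (by linarith) (by linarith)
    rw [show y + k - (y - 1 + k) = 1 by ring, show y + δ + k - (y + k) = δ by ring, div_one,
      le_div_iff₀ hδ] at this
    linarith
  have e2 : ∑' k : ℕ, (g (y + δ + k) - g (y + k)) ≤ ∑' k : ℕ, δ * (g (y + δ + 1 + k) - g (y + δ + k)) := by
    refine Summable.tsum_le_tsum (fun k => ?_) (s2.sub s1) ((s3.sub s2).mul_left δ)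
    have hk : (0:ℝ) ≤ k := Nat.cast_nonneg k
    have := hg.slope_mono_adjacent (x := y + k) (y := y + δ + k) (z := y + δ + 1 + k)
      (by simp only [Set.mem_Ioi]; linarith) (by simp only [Set.mem_Ioi]; linarith) (by linarith) (by linarith)
    rw [show y + δ + 1 + k - (y + δ + k) = 1 by ring, show y + δ + k - (y + k) = δ by ring, div_one,
      div_le_iff₀ hδ] at this
    linarith
  rw [tsum_mul_left, s1.tsum_sub s0, s2.tsum_sub s1] at e1
  rw [tsum_mul_left, s3.tsum_sub s2, s2.tsum_sub s1] at e2
  have a1 : (∑' k : ℕ, g (y + k)) - ∑' k : ℕ, g (y - 1 + k) = - g (y - 1) := by linarith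
  have a2 : (∑' k : ℕ, g (y + δ + 1 + k)) - ∑' k : ℕ, g (y + δ + k) = - g (y + δ) := by linarith
  rw [a1] at e1
  rw [a2] at e2
  constructor <;> linarith

noncomputable def gm (ε y : ℝ) : ℝ := -Real.log (1 - Real.exp (-(ε * y)))
noncomputable def gp (ε y : ℝ) : ℝ := Real.log (1 + Real.exp (-(ε * y)))

lemma one_sub_pos {ε y : ℝ} (hε : 0 < ε) (hy : 0 < y) : 0 < 1 - Real.exp (-(ε * y)) := by
  have : Real.exp (-(ε * y)) < 1 := (Real.exp_zero ▸ Real.exp_lt_exp.2 (by have := mul_pos hε hy; linarith))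
  linarith

lemma gm_convex {ε : ℝ} (hε : 0 < ε) : ConvexOn ℝ (Set.Ioi 0) (gm ε) := by
  refine MonotoneOn.convexOn_of_deriv (convex_Ioi 0) ?_ ?_ ?_
  all_goals
    have hd : ∀ y ∈ Set.Ioi (0:ℝ), HasDerivAt (gm ε) (-(ε / (Real.exp (ε * y) - 1))) y := by
      intro y hy
      have hp := one_sub_pos hε hy
      have h1 : HasDerivAt (fun y : ℝ => -(ε * y)) (-(ε * 1)) y :=
        ((hasDerivAt_id y).const_mul ε).neg
      have h2 := ((h1.exp.const_sub 1).log hp.ne').neg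
      refine h2.congr_deriv ?_
      symm
      have he : 0 < Real.exp (ε * y) := Real.exp_pos _
      rw [Real.exp_neg] at hp ⊢
      have : 0 < Real.exp (ε * y) - 1 := by
        have := Real.add_one_lt_exp (mul_pos hε hy).ne'
        have := mul_pos hε hy
        linarith
      have h3 : 1 - (Real.exp (ε * y))⁻¹ = (Real.exp (ε * y) - 1) / Real.exp (ε * y) := by
        field_simp
      rw [h3]
      field_simp
  · exact fun y hy => (hd y hy).continuousAt.continuousWithinAt
  · rw [interior_Ioi]
    exact fun y hy => (hd y hy).differentiableAt.differentiableWithinAt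
  · rw [interior_Ioi]
    intro a ha b hb hab
    rw [(hd a ha).deriv, (hd b hb).deriv]
    have : 0 < Real.exp (ε * a) - 1 := by
      have := Real.add_one_lt_exp (mul_pos hε ha).ne'
      have := mul_pos hε ha
      linarith
    gcongr

lemma gp_convex {ε : ℝ} (hε : 0 < ε) : ConvexOn ℝ Set.univ (gp ε) := by
  have hd : ∀ y, HasDerivAt (gp ε) (-(ε / (Real.exp (ε * y) + 1))) y := by
    intro y
    have hp : 0 < 1 + Real.exp (-(ε * y)) := by positivity
    have h1 : HasDerivAt (fun y : ℝ => -(ε * y)) (-(ε * 1)) y :=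
      ((hasDerivAt_id y).const_mul ε).neg
    have h2 := ((h1.exp.const_add 1).log hp.ne')
    refine h2.congr_deriv ?_
    symm
    have he : 0 < Real.exp (ε * y) := Real.exp_pos _
    rw [Real.exp_neg]
    have h3 : 1 + (Real.exp (ε * y))⁻¹ = (Real.exp (ε * y) + 1) / Real.exp (ε * y) := by
      field_simp
    rw [h3]
    field_simp
  refine Monotone.convexOn_univ_of_deriv (fun y => (hd y).differentiableAt) ?_
  intro a b hab
  rw [(hd a).deriv, (hd b).deriv]
  gcongr

lemma exp_split (ε y : ℝ) (k : ℕ) :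
    Real.exp (-(ε * (y + k))) = Real.exp (-(ε * y)) * Real.exp (-ε) ^ k := by
  rw [← Real.exp_nat_mul, ← Real.exp_add]; congr 1; ring

lemma summable_exp {ε : ℝ} (hε : 0 < ε) (y : ℝ) :
    Summable (fun k : ℕ => Real.exp (-(ε * (y + k)))) := by
  simp_rw [exp_split]
  exact (summable_geometric_of_lt_one (Real.exp_pos _).le (Real.exp_zero ▸ Real.exp_lt_exp.2 (by linarith))).mul_left _

lemma gm_summable {ε : ℝ} (hε : 0 < ε) (y : ℝ) : Summable (fun k : ℕ => gm ε (y + k)) := by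
  have := (Real.summable_log_one_add_of_summable (summable_exp hε y).neg).neg
  simpa [gm, sub_eq_add_neg] using this

lemma gp_summable {ε : ℝ} (hε : 0 < ε) (y : ℝ) : Summable (fun k : ℕ => gp ε (y + k)) :=
  Real.summable_log_one_add_of_summable (summable_exp hε y)

noncomputable def Sm (ε y : ℝ) : ℝ := ∑' k : ℕ, gm ε (y + k)
noncomputable def Sp (ε y : ℝ) : ℝ := ∑' k : ℕ, gp ε (y + k)

lemma poch_m {ε y : ℝ} (hε : 0 < ε) (hy : 0 < y) :
    qPochInf ((Real.exp (-(ε * y)) : ℝ) : ℂ) ((Real.exp (-ε) : ℝ) : ℂ)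
      = ((Real.exp (-(Sm ε y)) : ℝ) : ℂ) := by
  have h := ((Complex.hasSum_ofReal.2 (gm_summable hε y).hasSum.neg)).cexp.tprod_eq
  rw [qPochInf, Complex.ofReal_exp (-(Sm ε y)), Sm, ← h]
  congr 1
  ext k
  have hk : (0:ℝ) ≤ k := Nat.cast_nonneg k
  have hp := one_sub_pos hε (show 0 < y + k by linarith)
  simp only [Function.comp, gm, neg_neg]
  rw [← Complex.ofReal_exp, Real.exp_log hp, exp_split]
  push_cast
  rfl

lemma poch_p {ε : ℝ} (hε : 0 < ε) (y : ℝ) :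
    qPochInf (-((Real.exp (-(ε * y)) : ℝ) : ℂ)) ((Real.exp (-ε) : ℝ) : ℂ)
      = ((Real.exp (Sp ε y) : ℝ) : ℂ) := by
  have h := ((Complex.hasSum_ofReal.2 (gp_summable hε y).hasSum)).cexp.tprod_eq
  rw [qPochInf, Complex.ofReal_exp (Sp ε y), Sp, ← h]
  congr 1
  ext k
  have hp : 0 < 1 + Real.exp (-(ε * (y + k))) := by positivity
  simp only [Function.comp, gp]
  rw [← Complex.ofReal_exp, Real.exp_log hp, exp_split]
  push_cast
  ring

lemma tendsto_exp_one (y : ℝ) : Tendsto (fun ε : ℝ => 1 + Real.exp (-(ε * y))) (𝓝[>] 0) (𝓝 2) := by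
  have : Continuous (fun ε : ℝ => 1 + Real.exp (-(ε * y))) := by fun_prop
  have h := this.tendsto 0
  norm_num at h
  exact h.mono_left nhdsWithin_le_nhds

lemma limB (b : ℝ) {δ : ℝ} (hδ : 0 < δ) :
    Tendsto (fun ε => Real.exp (Sp ε (b + δ) - Sp ε b)) (𝓝[>] 0) (𝓝 ((2:ℝ) ^ (-δ))) := by
  have l1 := (tendsto_exp_one (b - 1)).rpow_const (p := -δ) (Or.inl two_ne_zero)
  have l2 := (tendsto_exp_one (b + δ)).rpow_const (p := -δ) (Or.inl two_ne_zero)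
  have bd : ∀ ε ∈ Set.Ioi (0:ℝ), _ := fun ε hε =>
    key_bounds (c := b - 2) ((gp_convex hε).subset (Set.subset_univ _) (convex_Ioi _))
      (fun y _ => gp_summable hε y) (show b - 2 < b - 1 by linarith) hδ
  refine tendsto_of_tendsto_of_tendsto_of_le_of_le' l1 l2 ?_ ?_
  · filter_upwards [self_mem_nhdsWithin] with ε hε
    rw [Real.rpow_def_of_pos (by positivity)]
    have := (bd ε hε).1
    unfold Sp
    apply Real.exp_le_exp.2
    refine le_trans (le_of_eq ?_) this
    unfold gp; ring
  · filter_upwards [self_mem_nhdsWithin] with ε hε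
    rw [Real.rpow_def_of_pos (by positivity)]
    have := (bd ε hε).2
    unfold Sp
    apply Real.exp_le_exp.2
    refine le_trans this (le_of_eq ?_)
    unfold gp; ring

noncomputable def hh (ε y : ℝ) : ℝ := (1 - Real.exp (-(ε * y))) / ε

lemma hh_pos {ε y : ℝ} (hε : 0 < ε) (hy : 0 < y) : 0 < hh ε y := div_pos (one_sub_pos hε hy) hε

lemma hh_tendsto (y : ℝ) : Tendsto (fun ε => hh ε y) (𝓝[>] 0) (𝓝 y) := by
  have h1 : HasDerivAt (fun ε : ℝ => 1 - Real.exp (-(ε * y))) y 0 := by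
    have h0 : HasDerivAt (fun ε : ℝ => -(ε * y)) (-(1 * y)) 0 :=
      ((hasDerivAt_id (0:ℝ)).mul_const y).neg
    have := h0.exp.const_sub 1
    simpa using this
  have := h1.tendsto_slope_zero_right
  refine this.congr fun ε => ?_
  simp [hh]
  ring

lemma Sm_split {ε : ℝ} (hε : 0 < ε) (x : ℝ) (n : ℕ) :
    Sm ε x = ∑ k ∈ Finset.range n, gm ε (x + k) + Sm ε (x + n) := by
  unfold Sm
  rw [← (gm_summable hε x).sum_add_tsum_nat_add n]
  congr 2
  ext k
  push_cast
  ring_nf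

lemma exp_gm {ε y : ℝ} (hε : 0 < ε) (hy : 0 < y) :
    Real.exp (gm ε y) = (ε * hh ε y)⁻¹ := by
  rw [gm, Real.exp_neg, Real.exp_log (one_sub_pos hε hy), hh, mul_div_cancel₀ _ hε.ne']

lemma main_split {ε x δ : ℝ} (hε : 0 < ε) (hx : 0 < x) (hδ : 0 < δ) (n : ℕ) :
    Real.exp (Sm ε (x + δ) - Sm ε x) =
     (∏ k ∈ Finset.range n, hh ε (x + k) / hh ε (x + δ + k)) *
      Real.exp (Sm ε (x + n + δ) - Sm ε (x + n)) := by
  rw [Sm_split hε x n, Sm_split hε (x + δ) n, show x + δ + n = x + n + δ by ring,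
    show ∀ a b c d : ℝ, a + b - (c + d) = (a - c) + (b - d) by intros; ring, Real.exp_add,
    ← Finset.sum_sub_distrib, Real.exp_sum]
  congr 1
  refine Finset.prod_congr rfl fun k _ => ?_
  have hk : (0:ℝ) ≤ k := Nat.cast_nonneg k
  rw [Real.exp_sub, exp_gm hε (by linarith), exp_gm hε (by linarith)]
  have := hh_pos hε (show 0 < x + k by linarith)
  have := hh_pos hε (show 0 < x + δ + k by linarith)
  field_simp

lemma tail_bounds {ε y δ : ℝ} (hε : 0 < ε) (hy : 0 < y - 1) (hδ : 0 < δ) :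
    hh ε (y - 1) ^ δ ≤ Real.exp (Sm ε (y + δ) - Sm ε y) * ε ^ (-δ) ∧
    Real.exp (Sm ε (y + δ) - Sm ε y) * ε ^ (-δ) ≤ hh ε (y + δ) ^ δ := by
  have kb := key_bounds (gm_convex hε) (fun y _ => gm_summable hε y) hy hδ
  have key : ∀ z, 0 < z → hh ε z ^ δ = Real.exp (-(δ * gm ε z)) * ε ^ (-δ) := by
    intro z hz
    have hp := one_sub_pos hε hz
    rw [hh, Real.div_rpow hp.le hε.le, Real.rpow_neg hε.le, div_eq_mul_inv,
      Real.rpow_def_of_pos hp, gm]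
    congr 2
    ring
  rw [key _ hy, key (y + δ) (by linarith)]
  have : 0 < ε ^ (-δ) := Real.rpow_pos_of_pos hε _
  unfold Sm
  constructor
  · gcongr; exact kb.1
  · gcongr; exact kb.2

noncomputable def PP (x δ : ℝ) (n : ℕ) : ℝ := ∏ k ∈ Finset.range n, ((x + k) / (x + δ + k))

lemma PP_lim {x δ : ℝ} (hx : 0 < x) (hδ : 0 < δ) (c : ℝ) :
    Tendsto (fun n : ℕ => PP x δ (n + 1) * (n + c) ^ δ) atTop
      (𝓝 (Real.Gamma (x + δ) / Real.Gamma x)) := by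
  have h1 := (Real.GammaSeq_tendsto_Gamma (x + δ)).div (Real.GammaSeq_tendsto_Gamma x)
    (Real.Gamma_pos_of_pos hx).ne'
  have h2 : Tendsto (fun n : ℕ => (1 + c / (n:ℝ)) ^ δ) atTop (𝓝 1) := by
    have : Tendsto (fun n : ℕ => 1 + c / (n:ℝ)) atTop (𝓝 (1 + 0)) :=
      tendsto_const_nhds.add (tendsto_const_div_atTop_nhds_zero_nat c)
    rw [add_zero] at this
    simpa using this.rpow_const (p := δ) (Or.inl one_ne_zero)
  have h3 := h1.mul h2
  rw [mul_one] at h3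
  refine h3.congr' ?_
  filter_upwards [eventually_gt_atTop 0, (tendsto_natCast_atTop_atTop (R := ℝ)).eventually_gt_atTop (-c)] with n hn hc
  have hn' : (0:ℝ) < n := Nat.cast_pos.2 hn
  simp only [Pi.div_apply, Real.GammaSeq, PP, Finset.prod_div_distrib]
  have e : (n:ℝ) + c = n * (1 + c / n) := by field_simp
  have : 0 < 1 + c / n := by
    have : 1 + c / n = (n + c) / n := by field_simp
    rw [this]; exact div_pos (by linarith) hn'
  rw [e, Real.mul_rpow hn'.le this.le, Real.rpow_add hn']
  have p1 : 0 < ∏ k ∈ Finset.range (n + 1), (x + k) := Finset.prod_pos fun k _ => by positivity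
  have p2 : 0 < ∏ k ∈ Finset.range (n + 1), (x + δ + k) := Finset.prod_pos fun k _ => by positivity
  have p3 : 0 < (n:ℝ) ^ x := Real.rpow_pos_of_pos hn' _
  have p4 : (0:ℝ) < n.factorial := Nat.cast_pos.2 n.factorial_pos
  field_simp

lemma prod_lim {x δ : ℝ} (hx : 0 < x) (hδ : 0 < δ) (n : ℕ) :
    Tendsto (fun ε => ∏ k ∈ Finset.range n, hh ε (x + k) / hh ε (x + δ + k)) (𝓝[>] 0)
      (𝓝 (PP x δ n)) := by
  refine tendsto_finsetProd _ fun k _ => (hh_tendsto _).div (hh_tendsto _) ?_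
  positivity

lemma limA {x δ : ℝ} (hx : 0 < x) (hδ : 0 < δ) :
    Tendsto (fun ε => Real.exp (Sm ε (x + δ) - Sm ε x) * ε ^ (-δ)) (𝓝[>] 0)
      (𝓝 (Real.Gamma (x + δ) / Real.Gamma x)) := by
  have hprod : ∀ ε, 0 < ε → ∀ n : ℕ,
      0 ≤ ∏ k ∈ Finset.range n, hh ε (x + k) / hh ε (x + δ + k) := fun ε hε n =>
    Finset.prod_nonneg fun k _ => div_nonneg (hh_pos hε (by positivity)).le (hh_pos hε (by positivity)).le
  refine tendsto_order.2 ⟨fun a ha => ?_, fun a ha => ?_⟩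
  · obtain ⟨n, hn⟩ := ((PP_lim hx hδ x).eventually_const_lt ha).exists
    have hl := (prod_lim hx hδ (n + 1)).mul
      ((hh_tendsto (n + x)).rpow_const (p := δ) (Or.inr hδ.le))
    filter_upwards [hl.eventually_const_lt hn, self_mem_nhdsWithin] with ε h1 hε
    refine h1.trans_le ?_
    have hb := (tail_bounds hε (y := x + (n + 1 : ℕ)) (by push_cast; have : (0:ℝ) ≤ n := Nat.cast_nonneg n; linarith) hδ).1
    rw [main_split hε hx hδ (n + 1), mul_assoc]
    refine mul_le_mul_of_nonneg_left ?_ (hprod ε hε _)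
    rw [show x + ((n + 1 : ℕ) : ℝ) - 1 = n + x by push_cast; ring] at hb
    exact hb
  · obtain ⟨n, hn⟩ := ((PP_lim hx hδ (x + 1 + δ)).eventually_lt_const ha).exists
    have hl := (prod_lim hx hδ (n + 1)).mul
      ((hh_tendsto (n + (x + 1 + δ))).rpow_const (p := δ) (Or.inr hδ.le))
    filter_upwards [hl.eventually_lt_const hn, self_mem_nhdsWithin] with ε h1 hε
    refine lt_of_le_of_lt ?_ h1
    have hb := (tail_bounds hε (y := x + (n + 1 : ℕ)) (by push_cast; have : (0:ℝ) ≤ n := Nat.cast_nonneg n; linarith) hδ).2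
    rw [main_split hε hx hδ (n + 1), mul_assoc]
    refine mul_le_mul_of_nonneg_left ?_ (hprod ε hε _)
    rw [show ((n:ℝ) + (x + 1 + δ)) = x + ((n + 1 : ℕ) : ℝ) + δ by push_cast; ring]
    exact hb

lemma eps_tendsto : Tendsto (fun N : ℕ => 2 / Real.sqrt N) atTop (𝓝[>] 0) := by
  refine tendsto_nhdsWithin_iff.2 ⟨?_, ?_⟩
  · exact (Real.tendsto_sqrt_atTop.comp tendsto_natCast_atTop_atTop).const_div_atTop 2
  · filter_upwards [eventually_gt_atTop 0] with N hN
    have : (0:ℝ) < N := Nat.cast_pos.2 hN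
    exact div_pos two_pos (Real.sqrt_pos.2 this)

theorem statement10 (u v w r t : ℝ) (huv : 0 < u + v) (hw : 0 < w) (hr : 0 < r)
    (ht1 : -(2 * w) < t) (ht2 : t < 2 * r) (hu : u - t / 2 < 0) :
    Tendsto (fun N : ℕ =>
      Complex.ofReal ((N : ℝ) ^ (u + v)) *
      (qPochInf (qpow N (-2 * u + t)) (qN N) * qPochInf (-(qpow N (v + w + t))) (qN N) *
       qPochInf (-(qpow N (v + r))) (qN N) * qPochInf (qpow N (w + r)) (qN N)) /
      (qPochInf (qpow N (v - u + t)) (qN N) * qPochInf (-(qpow N (w - u + t))) (qN N) *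
       qPochInf (-(qpow N (r - u))) (qN N) * qPochInf (qpow N (u + v + w + r)) (qN N)))
      atTop
      (nhds (Complex.Gamma ((u + v + w + r : ℝ) : ℂ) * Complex.Gamma ((v - u + t : ℝ) : ℂ) /
        (Complex.Gamma ((-2 * u + t : ℝ) : ℂ) * Complex.Gamma ((w + r : ℝ) : ℂ)))) := by
  have hx1 : 0 < -2 * u + t := by linarith
  have hx2 : 0 < w + r := by linarith
  have key := ((limA hx1 huv).mul (limA hx2 huv)).mul
    ((limB (w - u + t) huv).mul (limB (r - u) huv))
  have key2 := (key.comp eps_tendsto).mul_const ((2:ℝ) ^ (u + v) * (2:ℝ) ^ (u + v))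
  have key3 := (Complex.continuous_ofReal.tendsto _).comp key2
  have hlim : ((Real.Gamma (-2 * u + t + (u + v)) / Real.Gamma (-2 * u + t) *
      (Real.Gamma (w + r + (u + v)) / Real.Gamma (w + r)) *
      ((2:ℝ) ^ (-(u + v)) * (2:ℝ) ^ (-(u + v))) * ((2:ℝ) ^ (u + v) * (2:ℝ) ^ (u + v)) : ℝ) : ℂ) =
      Complex.Gamma ((u + v + w + r : ℝ) : ℂ) * Complex.Gamma ((v - u + t : ℝ) : ℂ) /
        (Complex.Gamma ((-2 * u + t : ℝ) : ℂ) * Complex.Gamma ((w + r : ℝ) : ℂ)) := by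
    simp only [Complex.Gamma_ofReal]
    rw [← Complex.ofReal_mul, ← Complex.ofReal_mul, ← Complex.ofReal_div]
    congr 1
    have h2 : (0:ℝ) < 2 ^ (u + v) := by positivity
    have g1 := Real.Gamma_pos_of_pos hx1
    have g2 := Real.Gamma_pos_of_pos hx2
    rw [show -2 * u + t + (u + v) = v - u + t by ring,
      show w + r + (u + v) = u + v + w + r by ring, Real.rpow_neg two_pos.le]
    field_simp
  rw [hlim] at key3
  refine key3.congr' ?_
  filter_upwards [eventually_gt_atTop 0] with N hN
  have hN' : (0:ℝ) < N := Nat.cast_pos.2 hN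
  have hs : 0 < Real.sqrt N := Real.sqrt_pos.2 hN'
  simp only [Function.comp]
  obtain ⟨ε, hε'⟩ : ∃ ε, ε = 2 / Real.sqrt N := ⟨_, rfl⟩
  have hε : 0 < ε := by rw [hε']; positivity
  have hq : qN N = Real.exp (-ε) := by rw [qN, hε']; congr 1; ring
  have hp : ∀ x, qpow N x = ((Real.exp (-(ε * x)) : ℝ) : ℂ) := by
    intro x; rw [qpow, hε']; congr 2; ring
  have hNe : (N:ℝ) ^ (u + v) = ε ^ (-(u + v)) * ε ^ (-(u + v)) * ((2:ℝ) ^ (u + v) * (2:ℝ) ^ (u + v)) := by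
    have : (N:ℝ) = (2 / ε) * (2 / ε) := by
      rw [hε']; field_simp; rw [Real.sq_sqrt hN'.le]
    rw [this, Real.mul_rpow (by positivity) (by positivity), Real.div_rpow two_pos.le hε.le,
      Real.rpow_neg hε.le]
    ring
  rw [← hε', hq]
  simp only [hp]
  rw [poch_m hε hx1, poch_m hε hx2, poch_m hε (show 0 < v - u + t by linarith),
    poch_m hε (show 0 < u + v + w + r by linarith), poch_p hε, poch_p hε, poch_p hε, poch_p hε, hNe]
  simp only [← Complex.ofReal_mul, ← Complex.ofReal_div]
  congr 1
  rw [show -2 * u + t + (u + v) = v - u + t by ring,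
    show w + r + (u + v) = u + v + w + r by ring,
    show w - u + t + (u + v) = v + w + t by ring,
    show r - u + (u + v) = v + r by ring]
  simp only [Real.exp_sub, Real.exp_neg]
  field_simp
end

section
/- For every η > 1 there exist a positive integer N₀ and constants C, χ > 0 such that for all integers N > N₀ and all real y ∈ [0, 2N]: 0 ≤ ( √N · arccos(1 − y/(2N)) − √y ) · log N ≤ C · N^{−χ} · (1 + √y)^η. -/
open Filter

lemma arccos_aux (s : ℝ) (hs : 0 ≤ s) (hs2 : s ^ 2 ≤ 2) :
    s ≤ Real.arccos (1 - s ^ 2 / 2) ∧ Real.arccos (1 - s ^ 2 / 2) - s ≤ s ^ 3 / 2 := by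
  set t := Real.arccos (1 - s ^ 2 / 2) with ht
  have ht0 : 0 ≤ t := Real.arccos_nonneg _
  have htpi : t ≤ Real.pi / 2 := Real.arccos_le_pi_div_two.2 (by linarith)
  have hcos : Real.cos t = 1 - s ^ 2 / 2 :=
    Real.cos_arccos (by linarith) (by nlinarith [sq_nonneg s])
  have hsin0 : 0 ≤ Real.sin (t / 2) :=
    Real.sin_nonneg_of_nonneg_of_le_pi (by linarith) (by linarith [Real.pi_pos])
  have hh : Real.cos t = 1 - 2 * Real.sin (t / 2) ^ 2 := by
    have h1 := Real.cos_two_mul (t / 2)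
    have h2 := Real.sin_sq_add_cos_sq (t / 2)
    rw [show 2 * (t / 2) = t by ring] at h1
    linarith
  have hs' : s = 2 * Real.sin (t / 2) := by
    have : s ^ 2 = (2 * Real.sin (t / 2)) ^ 2 := by nlinarith
    exact (pow_left_inj₀ hs (by linarith) (by norm_num)).1 this
  have h1 : Real.sin (t / 2) ≤ t / 2 := Real.sin_le (by linarith)
  refine ⟨by linarith, ?_⟩
  have h2 : 2 / Real.pi * (t / 2) ≤ Real.sin (t / 2) :=
    Real.mul_le_sin (by linarith) (by linarith [Real.pi_pos])
  have h3 : t ≤ 2 * s := by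
    have h5 : (1 / 2 : ℝ) ≤ 2 / Real.pi := by
      rw [div_le_div_iff₀ (by norm_num) Real.pi_pos]
      linarith [Real.pi_le_four]
    nlinarith
  rcases ht0.eq_or_lt with h | h
  · rw [← h]
    have : 0 ≤ s ^ 3 := by positivity
    linarith
  · have h4 := Real.sin_gt_sub_cube (x := t / 2) (by linarith)
    have h6 : t ^ 3 ≤ (2 * s) ^ 3 := pow_le_pow_left₀ ht0 h3 3
    nlinarith

theorem statement13 (η : ℝ) (hη : 1 < η) :
    ∃ N₀ : ℕ, ∃ C > (0 : ℝ), ∃ χ > (0 : ℝ), ∀ N : ℕ, N₀ < N → ∀ y : ℝ, 0 ≤ y → y ≤ 2 * (N : ℝ) →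
      0 ≤ (Real.sqrt N * Real.arccos (1 - y / (2 * (N : ℝ))) - Real.sqrt y) * Real.log N ∧
      (Real.sqrt N * Real.arccos (1 - y / (2 * (N : ℝ))) - Real.sqrt y) * Real.log N ≤
        C * (N : ℝ) ^ (-χ) * (1 + Real.sqrt y) ^ η := by
  obtain ⟨δ, hδ, hδ1, hδ2⟩ : ∃ δ : ℝ, 0 < δ ∧ 1 + δ ≤ η ∧ δ ≤ 2 :=
    ⟨min (η - 1) 2, lt_min (by linarith) (by norm_num),
      by linarith [min_le_left (η - 1) 2], min_le_right _ _⟩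
  refine ⟨0, 2 / (δ / 4), by positivity, δ / 4, by positivity, ?_⟩
  intro N hN y hy hyN
  have hN0 : (0 : ℝ) < N := by exact_mod_cast hN
  have hN1 : (1 : ℝ) ≤ N := by exact_mod_cast hN
  have hlog : 0 ≤ Real.log N := Real.log_nonneg hN1
  have hr : 0 < Real.sqrt N := Real.sqrt_pos.2 hN0
  set s := Real.sqrt y / Real.sqrt N with hs
  have hs0 : 0 ≤ s := by positivity
  have hsq : s ^ 2 = y / N := by
    rw [hs, div_pow, Real.sq_sqrt hy, Real.sq_sqrt hN0.le]
  have hs2 : s ^ 2 ≤ 2 := by rw [hsq, div_le_iff₀ hN0]; exact hyN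
  have harg : 1 - y / (2 * (N : ℝ)) = 1 - s ^ 2 / 2 := by
    rw [hsq]; field_simp
  have hrs : Real.sqrt N * s = Real.sqrt y := by rw [hs]; field_simp
  obtain ⟨h1, h2⟩ := arccos_aux s hs0 hs2
  rw [harg]
  have hE : Real.sqrt N * Real.arccos (1 - s ^ 2 / 2) - Real.sqrt y
      = Real.sqrt N * (Real.arccos (1 - s ^ 2 / 2) - s) := by rw [mul_sub, hrs]
  rw [hE]
  refine ⟨by have := sub_nonneg.2 h1; positivity, ?_⟩
  have hsle : s ≤ 2 := by nlinarith
  have hpow : s ^ 2 ≤ 4 * s ^ δ := by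
    have e1 : (s / 2) ^ (2 : ℝ) ≤ (s / 2) ^ δ := by
      rcases hs0.eq_or_lt with h | h
      · rw [← h]; simp [Real.zero_rpow hδ.ne']
      · exact Real.rpow_le_rpow_of_exponent_ge (by positivity) (by linarith) hδ2
    have e2 : (s / 2) ^ δ ≤ s ^ δ :=
      Real.rpow_le_rpow (by positivity) (by linarith) hδ.le
    rw [Real.rpow_two] at e1
    nlinarith
  have hEle : Real.sqrt N * (Real.arccos (1 - s ^ 2 / 2) - s) ≤ 2 * (Real.sqrt y * s ^ δ) := by
    calc _ ≤ Real.sqrt N * (s ^ 3 / 2) := by gcongr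
      _ = Real.sqrt y * s ^ 2 / 2 := by rw [← hrs]; ring
      _ ≤ Real.sqrt y * (4 * s ^ δ) / 2 := by gcongr
      _ = _ := by ring
  have hsd : s ^ δ = Real.sqrt y ^ δ * (N : ℝ) ^ (-(δ / 2)) := by
    rw [hs, Real.div_rpow (Real.sqrt_nonneg _) (Real.sqrt_nonneg _), Real.sqrt_eq_rpow (N : ℝ),
      ← Real.rpow_mul hN0.le, Real.rpow_neg hN0.le, div_eq_mul_inv]
    congr 3
    ring
  have hl : Real.log N ≤ (N : ℝ) ^ (δ / 4) / (δ / 4) :=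
    Real.log_le_rpow_div hN0.le (by positivity)
  have hy1 : Real.sqrt y * Real.sqrt y ^ δ ≤ (1 + Real.sqrt y) ^ η := by
    have hq := Real.sqrt_nonneg y
    calc Real.sqrt y * Real.sqrt y ^ δ
        ≤ (1 + Real.sqrt y) * (1 + Real.sqrt y) ^ δ := by gcongr <;> linarith
      _ = (1 + Real.sqrt y) ^ (1 + δ) := by
        rw [Real.rpow_add (by positivity), Real.rpow_one]
      _ ≤ _ := Real.rpow_le_rpow_of_exponent_le (by linarith) hδ1
  have hNN : (N : ℝ) ^ (-(δ / 2)) * (N : ℝ) ^ (δ / 4) = (N : ℝ) ^ (-(δ / 4)) := by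
    rw [← Real.rpow_add hN0]; congr 1; ring
  calc _ ≤ 2 * (Real.sqrt y * s ^ δ) * ((N : ℝ) ^ (δ / 4) / (δ / 4)) := by gcongr
    _ = 2 / (δ / 4) * (N : ℝ) ^ (-(δ / 4)) * (Real.sqrt y * Real.sqrt y ^ δ) := by
      rw [hsd, ← hNN]; ring
    _ ≤ _ := by gcongr
end

section
/- For every b ∈ (0,1), every ε ∈ (0,1/2) and every r₀ > 0 there exist constants C > 0 and κ₀ > 0 such that for all κ ∈ (0, κ₀) and all real z > r₀: | log( (e^{−κz}; e^{−κ})_∞ ) + π²/(6κ) + (z − 1/2)·log κ + log( Γ(z)/√(2π) ) | ≤ C·( κ(1+z)² + κ^b (1+z)^{1+2b+ε} ). -/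
open Filter

/-- Infinite q-Pochhammer symbol `(a;q)_∞ = ∏_{k=0}^∞ (1 - a q^k)` for real `a, q`. -/
noncomputable def qPochInfR (a q : ℝ) : ℝ := ∏' k : ℕ, (1 - a * q ^ k)

lemma aux_log_hasSum {κ z : ℝ} (hκ : 0 < κ) (hz : 0 < z) :
    HasSum (fun k : ℕ => Real.log (1 - Real.exp (-(κ * (z + k)))))
      (Real.log (qPochInfR (Real.exp (-(κ * z))) (Real.exp (-κ)))) := by
  have hq : ∀ k : ℕ, Real.exp (-(κ * (z + k))) = Real.exp (-(κ * z)) * Real.exp (-κ) ^ k := by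
    intro k
    rw [← Real.exp_nat_mul, ← Real.exp_add]; ring_nf
  have hpos : ∀ k : ℕ, 0 < 1 - Real.exp (-(κ * (z + k))) := by
    intro k
    have : 0 < κ * (z + k) := by positivity
    have := Real.exp_lt_one_iff.mpr (show -(κ * (z + k)) < 0 by linarith)
    linarith
  have hs : Summable (fun k : ℕ => Real.log (1 - Real.exp (-(κ * (z + k))))) := by
    have h1 : Summable (fun k : ℕ => -Real.exp (-(κ * (z + k)))) := by
      simp_rw [hq]
      exact ((summable_geometric_of_lt_one (Real.exp_pos _).le
        (Real.exp_lt_one_iff.mpr (by linarith))).mul_left _).neg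
    simpa [sub_eq_add_neg] using Real.summable_log_one_add_of_summable h1
  have := Real.rexp_tsum_eq_tprod hpos hs
  unfold qPochInfR
  simp_rw [← hq]
  rw [← this, Real.log_exp]
  exact hs.hasSum

lemma aux_poch_pos {κ z : ℝ} (hκ : 0 < κ) (hz : 0 < z) :
    0 < qPochInfR (Real.exp (-(κ * z))) (Real.exp (-κ)) := by
  have hq : ∀ k : ℕ, Real.exp (-(κ * (z + k))) = Real.exp (-(κ * z)) * Real.exp (-κ) ^ k := by
    intro k
    rw [← Real.exp_nat_mul, ← Real.exp_add]; ring_nf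
  have hpos : ∀ k : ℕ, 0 < 1 - Real.exp (-(κ * (z + k))) := by
    intro k
    have : 0 < κ * (z + k) := by positivity
    have := Real.exp_lt_one_iff.mpr (show -(κ * (z + k)) < 0 by linarith)
    linarith
  have := Real.rexp_tsum_eq_tprod hpos (aux_log_hasSum hκ hz).summable
  unfold qPochInfR
  simp_rw [← hq]
  rw [← this]
  exact Real.exp_pos _

lemma aux_eta {κ : ℝ} (hκ : 0 < κ) :
    ModularForm.eta ((κ / (2 * Real.pi) : ℝ) * Complex.I) =
      ((Real.exp (-κ / 24) * qPochInfR (Real.exp (-(κ * 1))) (Real.exp (-κ)) : ℝ) : ℂ) := by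
  unfold ModularForm.eta qPochInfR
  have hpi : (Real.pi : ℂ) ≠ 0 := by exact_mod_cast Real.pi_ne_zero
  have hm : Multipliable (fun k : ℕ => 1 - Real.exp (-(κ * 1)) * Real.exp (-κ) ^ k) := by
    have hs : Summable (fun k : ℕ => -(Real.exp (-(κ * 1)) * Real.exp (-κ) ^ k)) :=
      ((summable_geometric_of_lt_one (Real.exp_pos _).le
        (Real.exp_lt_one_iff.mpr (by linarith))).mul_left _).neg
    simpa [sub_eq_add_neg] using Real.multipliable_one_add_of_summable hs
  rw [Complex.ofReal_mul]
  rw [show ((∏' k : ℕ, (1 - Real.exp (-(κ * 1)) * Real.exp (-κ) ^ k) : ℝ) : ℂ) =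
    ∏' k : ℕ, ((1 - Real.exp (-(κ * 1)) * Real.exp (-κ) ^ k : ℝ) : ℂ) from
      hm.map_tprod Complex.ofRealHom Complex.continuous_ofReal]
  push_cast
  congr 1
  · unfold Function.Periodic.qParam
    congr 1
    push_cast
    field_simp
    rw [Complex.I_sq]
    ring
  · refine tprod_congr fun n => ?_
    rw [ModularForm.eta_q_eq_cexp, ← Complex.exp_nat_mul, ← Complex.exp_add]
    congr 2
    field_simp
    rw [Complex.I_sq]
    ring

lemma aux_eta_S {κ : ℝ} (hκ : 0 < κ) :
    (Real.exp (-(4 * Real.pi ^ 2 / κ) / 24) *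
      qPochInfR (Real.exp (-((4 * Real.pi ^ 2 / κ) * 1))) (Real.exp (-(4 * Real.pi ^ 2 / κ)))) ^ 2
    = (κ / (2 * Real.pi)) *
      (Real.exp (-κ / 24) * qPochInfR (Real.exp (-(κ * 1))) (Real.exp (-κ))) ^ 2 := by
  have hpi := Real.pi_pos
  have hpi' : (Real.pi : ℂ) ≠ 0 := by exact_mod_cast Real.pi_ne_zero
  have hκ' : (κ : ℂ) ≠ 0 := by exact_mod_cast hκ.ne'
  have h := ModularForm.eta_comp_eq_csqrt_I_inv
    (show ((κ / (2 * Real.pi) : ℝ) * Complex.I : ℂ) ∈ UpperHalfPlane.upperHalfPlaneSet by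
      
      change 0 < (((κ / (2 * Real.pi) : ℝ) * Complex.I : ℂ)).im
      rw [Complex.im_ofReal_mul, Complex.I_im]; positivity)
  have e : (-1 / ((κ / (2 * Real.pi) : ℝ) * Complex.I) : ℂ) =
      ((4 * Real.pi ^ 2 / κ) / (2 * Real.pi) : ℝ) * Complex.I := by
    push_cast
    field_simp
    rw [Complex.I_sq]; ring
  simp only [Function.comp, Pi.smul_apply, Pi.mul_apply, smul_eq_mul] at h
  rw [e, aux_eta hκ, aux_eta (by positivity)] at h
  have hs : ∀ w : ℂ, Complex.sqrt w ^ 2 = w := by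
    intro w; simp [Complex.sqrt]
  have h2 := congrArg (fun w : ℂ => w ^ 2) h
  simp only [mul_pow, inv_pow, hs] at h2
  have : (Complex.I)⁻¹ * (((κ / (2 * Real.pi) : ℝ) * Complex.I) *
     ((Real.exp (-κ / 24) * qPochInfR (Real.exp (-(κ * 1))) (Real.exp (-κ)) : ℝ) : ℂ) ^ 2) =
     (((κ / (2 * Real.pi)) * (Real.exp (-κ / 24) * qPochInfR (Real.exp (-(κ * 1))) (Real.exp (-κ))) ^ 2 : ℝ) : ℂ) := by
    push_cast
    field_simp
  rw [this] at h2
  exact_mod_cast h2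

lemma aux_log_tail {κ : ℝ} (hκ : 1 ≤ κ) :
    |Real.log (qPochInfR (Real.exp (-(κ * 1))) (Real.exp (-κ)))| ≤ 4 / κ := by
  have hs := aux_log_hasSum (κ := κ) (z := 1) (by linarith) one_pos
  set q := Real.exp (-κ) with hq
  have hq0 : 0 < q := Real.exp_pos _
  have hq1 : q ≤ 1 / (κ + 1) := by
    rw [hq, Real.exp_neg, ← one_div]
    exact one_div_le_one_div_of_le (by linarith) (Real.add_one_le_exp κ)
  have hq2 : q ≤ 1 / 2 := hq1.trans (one_div_le_one_div_of_le (by norm_num) (by linarith))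
  have hqk : ∀ k : ℕ, Real.exp (-(κ * (1 + k))) = q * q ^ k := by
    intro k
    rw [hq, ← Real.exp_nat_mul, ← Real.exp_add]; ring_nf
  have hg := ((hasSum_geometric_of_lt_one hq0.le (by linarith)).mul_left (2 * q))
  have hle : ∀ k : ℕ, ‖Real.log (1 - Real.exp (-(κ * (1 + k))))‖ ≤ 2 * q * q ^ k := by
    intro k
    rw [hqk]
    have hk1 : q ^ k ≤ 1 := pow_le_one₀ hq0.le (by linarith)
    have hk0 : 0 < q ^ k := by positivity
    have hx : q * q ^ k ≤ 1 / 2 := by nlinarith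
    have hx0 : 0 < q * q ^ k := by positivity
    rw [mul_assoc]
    generalize q * q ^ k = x at *
    have h1 := Real.one_sub_inv_le_log_of_pos (show 0 < 1 - x by linarith)
    have h2 := Real.log_nonpos (show 0 ≤ 1 - x by linarith) (by linarith)
    rw [Real.norm_eq_abs, abs_of_nonpos h2]
    have : (1 - x)⁻¹ ≤ 1 + 2 * x := by
      rw [inv_le_iff_one_le_mul₀ (by linarith)]; nlinarith
    linarith
  have := tsum_of_norm_bounded hg hle
  rw [hs.tsum_eq, Real.norm_eq_abs] at this
  refine this.trans ?_
  have h3 : (1 - q)⁻¹ ≤ 2 := by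
    rw [inv_le_iff_one_le_mul₀ (by linarith)]; linarith
  have h4 : q ≤ 1 / κ := hq1.trans (one_div_le_one_div_of_le (by linarith) (by linarith))
  have : 2 * q * (1 - q)⁻¹ ≤ 2 * q * 2 := by gcongr
  calc _ ≤ 4 * q := by linarith
    _ ≤ 4 * (1 / κ) := by linarith
    _ = 4 / κ := by ring

lemma aux_F_one {κ : ℝ} (hκ : 0 < κ) (hκ1 : κ < 1) :
    |Real.log (qPochInfR (Real.exp (-(κ * 1))) (Real.exp (-κ))) + Real.pi ^ 2 / (6 * κ)
      + (1 - 1 / 2) * Real.log κ - Real.log (Real.sqrt (2 * Real.pi))| ≤ κ := by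
  have hpi := Real.pi_gt_three
  have h := congrArg Real.log (aux_eta_S hκ)
  have hp1 := aux_poch_pos hκ one_pos
  have hk' : 0 < 4 * Real.pi ^ 2 / κ := by positivity
  have hp2 := aux_poch_pos hk' one_pos
  have hbig : 36 / κ ≤ 4 * Real.pi ^ 2 / κ := by gcongr; nlinarith
  have h36 : 36 ≤ 36 / κ := by rw [le_div_iff₀ hκ]; linarith
  have ht := aux_log_tail (κ := 4 * Real.pi ^ 2 / κ) (by linarith)
  generalize qPochInfR (Real.exp (-(4 * Real.pi ^ 2 / κ * 1))) (Real.exp (-(4 * Real.pi ^ 2 / κ))) = P2 at *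
  generalize qPochInfR (Real.exp (-(κ * 1))) (Real.exp (-κ)) = P1 at *
  rw [Real.log_mul (by positivity) (by positivity), Real.log_pow, Real.log_pow,
    Real.log_mul (by positivity) (by positivity), Real.log_mul (by positivity) (by positivity),
    Real.log_exp, Real.log_exp, Real.log_div (by positivity) (by positivity)] at h
  rw [Real.log_sqrt (by positivity)]
  have ht2 : 4 / (4 * Real.pi ^ 2 / κ) ≤ κ / 9 := by
    rw [div_le_iff₀ hk']
    field_simp
    nlinarith
  have e1 : Real.pi ^ 2 / (6 * κ) = 4 * Real.pi ^ 2 / κ / 24 := by field_simp; ring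
  rw [e1]
  rw [abs_le] at ht ⊢
  push_cast at h
  constructor <;> linarith [ht.1, ht.2]

lemma aux_key {x : ℝ} (hx : 0 < x) : x ^ 2 * Real.exp (-x) ≤ (1 - Real.exp (-x)) ^ 2 := by
  have h := Real.self_le_sinh_iff.mpr (show 0 ≤ x / 2 by linarith)
  rw [Real.sinh_eq] at h
  have e1 : Real.exp (-x) = Real.exp (-(x / 2)) ^ 2 := by
    rw [← Real.exp_nat_mul]; congr 1; push_cast; ring
  have e2 : Real.exp (x / 2) * Real.exp (-(x / 2)) = 1 := by
    rw [← Real.exp_add]; simp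
  have hp := Real.exp_pos (-(x / 2))
  rw [e1]
  generalize Real.exp (-(x / 2)) = u at *
  generalize Real.exp (x / 2) = v at *
  have h3 : x * u ≤ 1 - u ^ 2 := by nlinarith
  rw [← mul_pow]
  exact pow_le_pow_left₀ (by positivity) h3 2

lemma aux_convex_term {κ : ℝ} (hκ : 0 < κ) :
    ConvexOn ℝ (Set.Ioi 0) (fun x : ℝ => Real.log (1 - Real.exp (-(κ * x))) - Real.log x) := by
  have hpos : ∀ x : ℝ, 0 < x → 0 < 1 - Real.exp (-(κ * x)) := by
    intro x hx
    have : 0 < κ * x := by positivity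
    have := Real.exp_lt_one_iff.mpr (show -(κ * x) < 0 by linarith)
    linarith
  have he : ∀ x : ℝ, HasDerivAt (fun x : ℝ => Real.exp (-(κ * x)))
      (-(κ * Real.exp (-(κ * x)))) x := by
    intro x
    have := (((hasDerivAt_id x).const_mul κ).neg).exp
    convert! this using 1
    simp; ring
  have h1 : ∀ x : ℝ, 0 < x → HasDerivAt
      (fun x : ℝ => Real.log (1 - Real.exp (-(κ * x))) - Real.log x)
      (κ * Real.exp (-(κ * x)) / (1 - Real.exp (-(κ * x))) - x⁻¹) x := by
    intro x hx
    have := (((he x).const_sub 1).log (hpos x hx).ne').sub (Real.hasDerivAt_log hx.ne')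
    convert! this using 1
    simp
  have h2 : ∀ x : ℝ, 0 < x → HasDerivAt
      (fun x : ℝ => κ * Real.exp (-(κ * x)) / (1 - Real.exp (-(κ * x))) - x⁻¹)
      (1 / x ^ 2 - κ ^ 2 * Real.exp (-(κ * x)) / (1 - Real.exp (-(κ * x))) ^ 2) x := by
    intro x hx
    have := (((he x).const_mul κ).div ((he x).const_sub 1) (hpos x hx).ne').sub
      (hasDerivAt_inv hx.ne')
    convert! this using 1
    have := (hpos x hx).ne'
    field_simp
    ring
  refine convexOn_of_hasDerivWithinAt2_nonneg (convex_Ioi 0)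
    (fun x hx => (h1 x hx).continuousAt.continuousWithinAt)
    (f' := fun x : ℝ => κ * Real.exp (-(κ * x)) / (1 - Real.exp (-(κ * x))) - x⁻¹)
    (f'' := fun x : ℝ => 1 / x ^ 2 - κ ^ 2 * Real.exp (-(κ * x)) / (1 - Real.exp (-(κ * x))) ^ 2)
    ?_ ?_ ?_
  · intro x hx
    rw [interior_Ioi] at hx
    exact (h1 x hx).hasDerivWithinAt
  · intro x hx
    rw [interior_Ioi] at hx
    exact (h2 x hx).hasDerivWithinAt
  · intro x hx
    rw [interior_Ioi] at hx
    have hx' : 0 < x := hx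
    have hk := aux_key (show 0 < κ * x by positivity)
    have := hpos x hx'
    rw [sub_nonneg, div_le_div_iff₀ (by positivity) (by positivity)]
    linarith [hk, mul_pow κ x 2]

/-- The error function, up to an additive constant. -/
noncomputable def auxF (κ z : ℝ) : ℝ :=
  Real.log (qPochInfR (Real.exp (-(κ * z))) (Real.exp (-κ))) + Real.log (Real.Gamma z)
    + z * Real.log κ

lemma aux_convex {κ : ℝ} (hκ : 0 < κ) : ConvexOn ℝ (Set.Ioi 0) (auxF κ) := by
  let S : ℕ → ℝ → ℝ := fun n z =>
    (∑ m ∈ Finset.range (n + 1), (Real.log (1 - Real.exp (-(κ * (z + m)))) - Real.log (z + m)))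
      + (z * (Real.log n + Real.log κ) + Real.log (n.factorial : ℝ))
  have hS : ∀ z : ℝ, 0 < z → Tendsto (fun n => S n z) atTop (nhds (auxF κ z)) := by
    intro z hz
    have h1 := ((aux_log_hasSum hκ hz).tendsto_sum_nat).comp (tendsto_add_atTop_nat 1)
    have h2 := Real.BohrMollerup.tendsto_log_gamma hz
    have h3 := (h1.add h2).add_const (z * Real.log κ)
    refine h3.congr fun n => ?_
    simp only [S, Function.comp, Real.BohrMollerup.logGammaSeq, Finset.sum_sub_distrib]
    ring
  refine ⟨convex_Ioi 0, ?_⟩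
  intro x hx y hy a b ha hb hab
  have hx' : 0 < x := hx
  have hy' : 0 < y := hy
  have hxy : a • x + b • y ∈ Set.Ioi (0 : ℝ) := convex_Ioi 0 hx hy ha hb hab
  refine le_of_tendsto_of_tendsto' (hS _ hxy) (((hS x hx).const_smul a).add ((hS y hy).const_smul b)) ?_
  intro n
  simp only [S, smul_eq_mul]
  have hterm : ∀ m : ℕ, Real.log (1 - Real.exp (-(κ * (a * x + b * y + m)))) - Real.log (a * x + b * y + m)
      ≤ a * (Real.log (1 - Real.exp (-(κ * (x + m)))) - Real.log (x + m)) +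
        b * (Real.log (1 - Real.exp (-(κ * (y + m)))) - Real.log (y + m)) := by
    intro m
    have := (aux_convex_term hκ).2 (show x + m ∈ Set.Ioi (0 : ℝ) from Set.mem_Ioi.2 (by positivity))
      (show y + m ∈ Set.Ioi (0 : ℝ) from Set.mem_Ioi.2 (by positivity)) ha hb hab
    simp only [smul_eq_mul] at this
    have e : a * (x + m) + b * (y + m) = a * x + b * y + m := by linear_combination (m : ℝ) * hab
    rwa [e] at this
  have hsum := Finset.sum_le_sum (fun m (_ : m ∈ Finset.range (n + 1)) => hterm m)
  rw [Finset.sum_add_distrib, ← Finset.mul_sum, ← Finset.mul_sum] at hsum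
  have e : Real.log (n.factorial : ℝ) = (a + b) * Real.log (n.factorial : ℝ) := by rw [hab, one_mul]
  rw [add_mul] at e
  linarith

lemma aux_step {κ z : ℝ} (hκ : 0 < κ) (hz : 0 < z) :
    auxF κ z < auxF κ (z + 1) ∧ auxF κ (z + 1) ≤ auxF κ z + κ * z := by
  have h1 := aux_log_hasSum hκ hz
  have h2 := aux_log_hasSum hκ (show 0 < z + 1 by linarith)
  have h3 : Real.log (qPochInfR (Real.exp (-(κ * z))) (Real.exp (-κ))) =
      Real.log (1 - Real.exp (-(κ * z))) +
      Real.log (qPochInfR (Real.exp (-(κ * (z + 1)))) (Real.exp (-κ))) := by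
    rw [← h1.tsum_eq, h1.summable.tsum_eq_zero_add, ← h2.tsum_eq]
    simp only [Nat.cast_zero, add_zero, Nat.cast_add, Nat.cast_one]
    congr 1
    refine tsum_congr fun k => ?_
    ring_nf
  have hG : Real.log (Real.Gamma (z + 1)) = Real.log z + Real.log (Real.Gamma z) := by
    rw [Real.Gamma_add_one hz.ne', Real.log_mul hz.ne' (Real.Gamma_pos_of_pos hz).ne']
  have hx : 0 < κ * z := by positivity
  have hlt : 1 - Real.exp (-(κ * z)) < κ * z := by
    have := Real.add_one_lt_exp (show -(κ * z) ≠ 0 by linarith)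
    linarith
  have hp : 0 < 1 - Real.exp (-(κ * z)) := by
    have := Real.exp_lt_one_iff.mpr (show -(κ * z) < 0 by linarith)
    linarith
  have hge : κ * z * Real.exp (-(κ * z)) ≤ 1 - Real.exp (-(κ * z)) := by
    have h := Real.add_one_le_exp (κ * z)
    have e : Real.exp (κ * z) * Real.exp (-(κ * z)) = 1 := by rw [← Real.exp_add]; simp
    nlinarith [Real.exp_pos (-(κ * z))]
  have l1 := Real.log_lt_log hp hlt
  have l2 := Real.log_le_log (by positivity) hge
  rw [Real.log_mul hx.ne' (Real.exp_pos _).ne', Real.log_exp, Real.log_mul hκ.ne' hz.ne'] at l2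
  rw [Real.log_mul hκ.ne' hz.ne'] at l1
  unfold auxF
  rw [h3, hG]
  constructor <;> linarith

lemma aux_nat {κ : ℝ} (hκ : 0 < κ) (n : ℕ) :
    auxF κ 1 ≤ auxF κ (n + 1) ∧ auxF κ (n + 1) ≤ auxF κ 1 + κ * n ^ 2 := by
  induction n with
  | zero => simp
  | succ n ih =>
    have := aux_step hκ (show (0 : ℝ) < n + 1 by positivity)
    push_cast
    refine ⟨by linarith, ?_⟩
    have : κ * (n + 1) ≤ κ * (n + 1) ^ 2 - κ * n ^ 2 := by
      nlinarith [mul_nonneg hκ.le (Nat.cast_nonneg (α := ℝ) n)]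
    linarith

lemma aux_large {κ z : ℝ} (hκ : 0 < κ) (hz : 2 ≤ z) :
    auxF κ 1 ≤ auxF κ z ∧ auxF κ z ≤ auxF κ 1 + κ * z ^ 2 := by
  have hc := aux_convex hκ
  obtain ⟨n, hn⟩ : ∃ n : ℕ, ⌊z⌋₊ = n + 2 := by
    have : 2 ≤ ⌊z⌋₊ := Nat.le_floor (by exact_mod_cast hz)
    exact ⟨⌊z⌋₊ - 2, by omega⟩
  have h1 : (n : ℝ) + 2 ≤ z := by
    have := Nat.floor_le (show 0 ≤ z by linarith)
    rw [hn] at this; exact_mod_cast this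
  have h2 : z < (n : ℝ) + 3 := by
    have := Nat.lt_floor_add_one z
    rw [hn] at this; push_cast at this; linarith
  have hn0 : (0 : ℝ) ≤ n := Nat.cast_nonneg n
  have a0 := aux_nat hκ n
  have a1 := aux_nat hκ (n + 1)
  have a2 := aux_nat hκ (n + 2)
  push_cast at a1 a2
  have s0 := aux_step hκ (show (0 : ℝ) < n + 1 by positivity)
  have m1 := hc.le_max_of_mem_Icc (x := (n : ℝ) + 1) (y := z) (z := (n : ℝ) + 1 + 1)
    (Set.mem_Ioi.2 (by positivity)) (Set.mem_Ioi.2 (by linarith)) ⟨by linarith, by linarith⟩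
  have m2 := hc.le_max_of_mem_Icc (x := (n : ℝ) + 1 + 1) (y := (n : ℝ) + 2 + 1) (z := z)
    (Set.mem_Ioi.2 (by positivity)) (Set.mem_Ioi.2 (by positivity)) ⟨by linarith, by linarith⟩
  have k1 : κ * ((n : ℝ) + 1) ^ 2 ≤ κ * z ^ 2 := by gcongr; linarith
  have k2 : κ * ((n : ℝ) + 2) ^ 2 ≤ κ * z ^ 2 := by gcongr
  constructor
  · rcases le_max_iff.1 m1 with h | h <;> linarith
  · rcases le_max_iff.1 m2 with h | h <;> linarith

theorem statement15 (b ε r₀ : ℝ) (hb : b ∈ Set.Ioo (0 : ℝ) 1)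
    (hε : ε ∈ Set.Ioo (0 : ℝ) (1 / 2)) (hr₀ : 0 < r₀) :
    ∃ C > (0 : ℝ), ∃ κ₀ > (0 : ℝ), ∀ κ : ℝ, 0 < κ → κ < κ₀ → ∀ z : ℝ, r₀ < z →
      |Real.log (qPochInfR (Real.exp (-(κ * z))) (Real.exp (-κ))) +
        Real.pi ^ 2 / (6 * κ) + (z - 1 / 2) * Real.log κ +
        Real.log (Real.Gamma z / Real.sqrt (2 * Real.pi))| ≤
      C * (κ * (1 + z) ^ (2 : ℕ) + κ ^ b * (1 + z) ^ (1 + 2 * b + ε)) := by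
  refine ⟨20, by norm_num, 1, one_pos, ?_⟩
  intro κ hκ hκ1 z hz'
  have hz : 0 < z := hr₀.trans hz'
  have hF1 := aux_F_one hκ hκ1
  have s1 := aux_step hκ hz
  have s2 := aux_step hκ (show 0 < z + 1 by linarith)
  have hl := aux_large hκ (show 2 ≤ z + 1 + 1 by linarith)
  have hpi := Real.pi_pos
  rw [Real.log_div (Real.Gamma_pos_of_pos hz).ne' (by positivity)]
  have hrest : 0 ≤ κ ^ b * (1 + z) ^ (1 + 2 * b + ε) := by positivity
  have e1 : auxF κ 1 = Real.log (qPochInfR (Real.exp (-(κ * 1))) (Real.exp (-κ))) + Real.log κ := by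
    simp [auxF]
  have ez : auxF κ z = Real.log (qPochInfR (Real.exp (-(κ * z))) (Real.exp (-κ)))
    + Real.log (Real.Gamma z) + z * Real.log κ := rfl
  have hkz : 0 < κ * z := by positivity
  have hkz2 : 0 < κ * z ^ 2 := by positivity
  rw [abs_le] at hF1 ⊢
  constructor <;> nlinarith [hF1.1, hF1.2, hl.1, hl.2, s1.1, s1.2, s2.1, s2.2]
end
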